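/- arXiv:1907.04636 — 2 statements merged into one kernel-verified Lean document; each statement's English description precedes it below -/
import Mathlib

section
/- Assume condition (R) and let α∈[0,1). Then the radius of starlikeness of order α of h_{γ,σ}(·;q) equals the smallest positive root z_{γ,σ,1}(q) of the equation √r·λ_{γ,σ}'(√r;q) − 2(α−1)·λ_{γ,σ}(√r;q) = 0 (derivative with respect to the real variable). -/
noncomputable def qPochInf (a q : ℝ) : ℝ := ∏' k : ℕ, (1 - a * q ^ k)

noncomputable def qGamma (q x : ℝ) : ℝ :=
  qPochInf q q * (1 - q) ^ (1 - x) / qPochInf (q ^ x) q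

noncomputable def qML (γ σ q : ℝ) (z : ℂ) : ℂ :=
  ∑' n : ℕ,
    (((-1) ^ n * σ ^ (2 * n) * q ^ (n * (n - 1)) / qGamma q (2 * n + γ + 1) : ℝ) : ℂ) * z ^ (2 * n)

noncomputable def qMLR (γ σ q : ℝ) (x : ℝ) : ℝ :=
  ∑' n : ℕ,
    ((-1) ^ n * σ ^ (2 * n) * q ^ (n * (n - 1)) / qGamma q (2 * n + γ + 1)) * x ^ (2 * n)

def condR (q γ : ℝ) : Prop :=
  (γ = 0 ∨ γ = 1) ∨
    (γ ∈ Set.Ioo (0 : ℝ) 2 ∧ γ ≠ 1 ∧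
      1 < q⁻¹ * (1 - q) * (1 - q ^ (γ + 1)) * (1 - q ^ (γ + 2)))

noncomputable def radiusStarlike (α : ℝ) (f : ℂ → ℂ) : ℝ :=
  sSup {r : ℝ | 0 < r ∧ ∀ z : ℂ, 0 < ‖z‖ → ‖z‖ < r →
    α < (z * deriv f z / f z).re}

noncomputable def radiusConvex (α : ℝ) (f : ℂ → ℂ) : ℝ :=
  sSup {r : ℝ | 0 < r ∧ ∀ z : ℂ, ‖z‖ < r →
    α < (1 + z * deriv (deriv f) z / deriv f z).re}

noncomputable def fML (γ σ q : ℝ) (z : ℂ) : ℂ :=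
  Complex.exp ((1 / ((γ : ℂ) + 1)) *
    Complex.log (z ^ ((γ : ℂ) + 1) * (qGamma q (γ + 1) : ℂ) * qML γ σ q z))

noncomputable def gML (γ σ q : ℝ) (z : ℂ) : ℂ :=
  z * (qGamma q (γ + 1) : ℂ) * qML γ σ q z

noncomputable def hML (γ σ q : ℝ) (z : ℂ) : ℂ :=
  z * (qGamma q (γ + 1) : ℂ) *
    ∑' n : ℕ,
      (((-1) ^ n * σ ^ (2 * n) * q ^ (n * (n - 1)) / qGamma q (2 * n + γ + 1) : ℝ) : ℂ) * z ^ n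

noncomputable def hMLR (γ σ q : ℝ) (x : ℝ) : ℝ :=
  x * qGamma q (γ + 1) *
    ∑' n : ℕ,
      ((-1) ^ n * σ ^ (2 * n) * q ^ (n * (n - 1)) / qGamma q (2 * n + γ + 1)) * x ^ n

/-!
Write `λ(z) = F(z²)` and `h(z) = Γ_q(γ+1) z F(z)` with `F` entire. The equation for `√r` becomes
`r F'(r) = (α - 1) F(r)`, and with `P = -F' / F` one has `z h'(z) / h(z) = 1 - z P(z)`. If the
Taylor coefficients of `P` are nonnegative, then `|z P(z)| ≤ r P(r)` on `|z| = r`; since `r P(r)`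
increases strictly, `Re (z h' / h)` first reaches `α` at the real point `ρ` with `ρ P(ρ) = 1 - α`.
Such a `ρ` lies before the first zero of `F`: `P` converges on any disc free of zeros of `F`, and
if it converges on a closed disc, then `F` has no zero there, so convergence persists slightly
beyond; hence `r P(r)` takes the value `1 - α`.

Nonnegativity of the coefficients of `P` passes to coefficientwise limits and holds for polynomials
with positive roots, so `F` only has to be approximated by such polynomials, and its zeros never
enter. For `γ ∈ {0, 1}` the approximations come from applying the operator `f(x) - c f(p x)`, which
keeps roots positive as long as successive roots have ratio at least `1 / p`, to
`∏ k < N, (1 - p ^ k x)`. Otherwise condition (R) forces `q ≤ 1/2`, and then each coefficient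
satisfies `a_k ^ 2 > 4 a_{k-1} a_{k+1}`, so by Hutchinson's criterion the Taylor polynomials of `F`
have positive roots.
-/

section LogDeriv

open PowerSeries Filter Topology
open scoped PowerSeries

/-- The logarithmic derivative `F' / F` of the real power series `F` has nonpositive coefficients;
`P` below is `-F' / F`, and the equation is multiplied out so that `F` need not be invertible.
For an entire `F` of order less than one with positive zeros `ρₖ`, the coefficients of `P` are the
power sums `∑ₖ ρₖ ^ (-(n + 1))`. -/
def LogDerivNonpos (F : ℝ⟦X⟧) : Prop :=
  ∃ P : ℝ⟦X⟧, (∀ n, 0 ≤ coeff n P) ∧ d⁄dX ℝ F = -(P * F)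

namespace LogDerivNonpos

theorem one : LogDerivNonpos 1 := ⟨0, by simp, by simp⟩

theorem mul {F G : ℝ⟦X⟧} (hF : LogDerivNonpos F) (hG : LogDerivNonpos G) :
    LogDerivNonpos (F * G) := by
  obtain ⟨P, hP, hPF⟩ := hF
  obtain ⟨Q, hQ, hQG⟩ := hG
  refine ⟨P + Q, fun n ↦ ?_, ?_⟩
  · simpa only [map_add] using add_nonneg (hP n) (hQ n)
  · rw [Derivation.leibniz, hPF, hQG, smul_eq_mul, smul_eq_mul]
    ring

theorem prod {ι : Type*} {s : Finset ι} {F : ι → ℝ⟦X⟧} (hF : ∀ i ∈ s, LogDerivNonpos (F i)) :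
    LogDerivNonpos (∏ i ∈ s, F i) :=
  Finset.prod_induction F LogDerivNonpos (fun _ _ ↦ mul) one hF

theorem one_sub_C_mul_X {t : ℝ} (ht : 0 ≤ t) : LogDerivNonpos (1 - C t * X) := by
  refine ⟨mk fun n ↦ t ^ (n + 1), fun n ↦ by rw [coeff_mk]; positivity, ?_⟩
  ext n
  rw [mul_sub, mul_one, ← mul_assoc]
  cases n with
  | zero => simp
  | succ n => simp [coeff_succ_mul_X, pow_succ]

theorem C_mul {F : ℝ⟦X⟧} (hF : LogDerivNonpos F) (c : ℝ) : LogDerivNonpos (C c * F) := by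
  obtain ⟨P, hP, hPF⟩ := hF
  refine ⟨P, hP, ?_⟩
  rw [Derivation.leibniz, hPF, derivative_C, smul_eq_mul, smul_zero, add_zero]
  ring

theorem rescale {F : ℝ⟦X⟧} (hF : LogDerivNonpos F) {s : ℝ} (hs : 0 ≤ s) :
    LogDerivNonpos (PowerSeries.rescale s F) := by
  obtain ⟨P, hP, hPF⟩ := hF
  refine ⟨C s * PowerSeries.rescale s P, fun n ↦ ?_, ?_⟩
  · rw [coeff_C_mul, coeff_rescale]
    exact mul_nonneg hs (mul_nonneg (pow_nonneg hs n) (hP n))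
  · have hderiv : d⁄dX ℝ (PowerSeries.rescale s F) = C s * PowerSeries.rescale s (d⁄dX ℝ F) := by
      ext n
      simp only [coeff_derivative, coeff_rescale, coeff_C_mul]
      ring
    rw [hderiv, hPF, map_neg, map_mul]
    ring

-- Solving `F' = -P F` for the coefficients of `P` recursively shows that they converge as well.
theorem of_tendsto {F : ℕ → ℝ⟦X⟧} {G : ℝ⟦X⟧} (hF : ∀ m, LogDerivNonpos (F m))
    (hF0 : ∀ m, coeff 0 (F m) = 1)
    (hlim : ∀ n, Tendsto (fun m ↦ coeff n (F m)) atTop (𝓝 (coeff n G))) : LogDerivNonpos G := by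
  choose P hP hPF using hF
  have hrec (m n : ℕ) : coeff n (P m) = -(coeff (n + 1) (F m) * (n + 1)) -
      ∑ k ∈ Finset.range n, coeff k (P m) * coeff (n - k) (F m) := by
    have h := congrArg (coeff n) (hPF m)
    rw [coeff_derivative, map_neg, coeff_mul, Finset.Nat.sum_antidiagonal_eq_sum_range_succ_mk,
      Finset.sum_range_succ, Nat.sub_self, hF0, mul_one] at h
    linarith
  have hconv (n : ℕ) : ∃ l, Tendsto (fun m ↦ coeff n (P m)) atTop (𝓝 l) := by
    induction n using Nat.strong_induction_on with
    | _ n ih =>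
      choose! l hl using ih
      simp_rw [hrec _ n]
      exact ⟨_, ((hlim (n + 1)).mul_const _).neg.sub (tendsto_finsetSum _ fun k hk ↦
        (hl k (Finset.mem_range.1 hk)).mul (hlim (n - k)))⟩
  choose l hl using hconv
  refine ⟨mk l, fun n ↦ ?_, ?_⟩
  · rw [coeff_mk]
    exact ge_of_tendsto' (hl n) fun m ↦ hP m n
  · ext n
    refine tendsto_nhds_unique (l := atTop) (f := fun m ↦ coeff n (d⁄dX ℝ (F m))) ?_ ?_
    · simpa only [coeff_derivative] using (hlim (n + 1)).mul_const _
    · simp only [hPF, map_neg, coeff_mul, coeff_mk]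
      exact (tendsto_finsetSum _ fun ij _ ↦ (hl ij.1).mul (hlim ij.2)).neg

theorem coe_prod_one_sub_C_inv_mul_X {ι : Type*} {s : Finset ι} {y : ι → ℝ}
    (hy : ∀ i ∈ s, 0 < y i) :
    LogDerivNonpos
      ((∏ i ∈ s, (1 - Polynomial.C (y i)⁻¹ * Polynomial.X) : Polynomial ℝ) : ℝ⟦X⟧) := by
  rw [← Polynomial.coeToPowerSeries.ringHom_apply, map_prod]
  refine prod fun i hi ↦ ?_
  simpa using one_sub_C_mul_X (inv_nonneg.2 (hy i hi).le)

end LogDerivNonpos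

end LogDeriv

section RealRooted

open Polynomial Finset

theorem natDegree_prod_one_sub_C_mul_X_le {R ι : Type*} [CommRing R] (s : Finset ι) (t : ι → R) :
    (∏ i ∈ s, (1 - C (t i) * X)).natDegree ≤ #s := by
  calc _ ≤ ∑ i ∈ s, (1 - C (t i) * X).natDegree := natDegree_prod_le s _
    _ ≤ #s • 1 := sum_le_card_nsmul _ _ _ fun i _ ↦ by compute_degree
    _ = #s := by rw [smul_eq_mul, mul_one]

theorem eq_prod_one_sub_C_inv_mul_X {K ι : Type*} [Field K] {f : K[X]} {s : Finset ι} {y : ι → K}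
    (hdeg : f.natDegree ≤ #s) (hf0 : f.eval 0 = 1) (hinj : Set.InjOn y s)
    (hroot : ∀ i ∈ s, f.eval (y i) = 0) : f = ∏ i ∈ s, (1 - C (y i)⁻¹ * X) := by
  classical
  have hy0 : ∀ i ∈ s, y i ≠ 0 := fun i hi h ↦ by simpa [h, hf0] using hroot i hi
  have hcard : #(insert 0 (s.image y)) = #s + 1 := by
    rw [card_insert_of_notMem (by simpa using hy0), card_image_of_injOn hinj]
  have hlt {g : K[X]} (hg : g.natDegree ≤ #s) : g.degree < #(insert 0 (s.image y)) :=
    (degree_le_of_natDegree_le hg).trans_lt (by rw [hcard]; exact_mod_cast Nat.lt_succ_self _)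
  refine eq_of_degrees_lt_of_eval_finset_eq (insert 0 (s.image y)) (hlt hdeg)
    (hlt (natDegree_prod_one_sub_C_mul_X_le s fun i ↦ (y i)⁻¹)) fun x hx ↦ ?_
  rcases mem_insert.1 hx with rfl | hx
  · simp [hf0, eval_prod]
  · obtain ⟨i, hi, rfl⟩ := mem_image.1 hx
    rw [hroot i hi, eval_prod, prod_eq_zero hi]
    simp [hy0 i hi]

theorem exists_pos_roots_of_alternating {f : ℝ[X]} {N : ℕ} {l r : ℕ → ℝ} (hdeg : f.natDegree ≤ N)
    (hf0 : f.eval 0 = 1) (hl : ∀ k < N, 0 ≤ l k) (hlr : ∀ k < N, l k ≤ r k)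
    (hrl : ∀ i j, i < j → j < N → r i < l j) (hfl : ∀ k < N, 0 ≤ (-1) ^ k * f.eval (l k))
    (hfr : ∀ k < N, (-1) ^ k * f.eval (r k) ≤ 0) :
    ∃ y : ℕ → ℝ, (∀ k < N, 0 < y k ∧ y k ∈ Set.Icc (l k) (r k)) ∧
      f = ∏ i ∈ range N, (1 - C (y i)⁻¹ * X) := by
  have hivt : ∀ k < N, ∃ t ∈ Set.Icc (l k) (r k), (-1) ^ k * f.eval t = 0 := fun k hk ↦
    intermediate_value_Icc' (hlr k hk) (continuous_const.mul f.continuous).continuousOn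
      ⟨hfr k hk, hfl k hk⟩
  choose! y hy hroot using hivt
  replace hroot : ∀ k < N, f.eval (y k) = 0 := fun k hk ↦ by simpa using hroot k hk
  have hpos : ∀ k < N, 0 < y k := fun k hk ↦
    ((hl k hk).trans (hy k hk).1).lt_of_ne fun h ↦ by simpa [← h, hf0] using hroot k hk
  have hlt : ∀ i j, i < j → j < N → y i < y j := fun i j hij hj ↦
    (hy i (hij.trans hj)).2.trans_lt ((hrl i j hij hj).trans_le (hy j hj).1)
  have hmono : StrictMonoOn y (range N : Finset ℕ) := fun i _ j hj hij ↦
    hlt i j hij (mem_range.1 hj)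
  refine ⟨y, fun k hk ↦ ⟨hpos k hk, hy k hk⟩, ?_⟩
  exact eq_prod_one_sub_C_inv_mul_X (by rwa [card_range]) hf0 hmono.injOn
    fun i hi ↦ hroot i (mem_range.1 hi)

theorem neg_one_pow_mul_eval_prod_nonneg {N k : ℕ} (hk : k ≤ N) {x : ℕ → ℝ} {t : ℝ}
    (hx : ∀ i < N, 0 < x i) (hlt : ∀ i < k, x i ≤ t) (hge : ∀ i, k ≤ i → i < N → t ≤ x i) :
    0 ≤ (-1) ^ k * (∏ i ∈ range N, (1 - C (x i)⁻¹ * X)).eval t := by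
  have hfactor (i : ℕ) : (1 - C (x i)⁻¹ * X).eval t = 1 - t / x i := by simp [inv_mul_eq_div]
  rw [eval_prod, ← prod_range_mul_prod_Ico _ hk, ← mul_assoc]
  refine mul_nonneg ?_ (prod_nonneg fun i hi ↦ ?_)
  · have hsign : ((-1 : ℝ)) ^ k = ∏ i ∈ range k, (-1) := by simp
    rw [hsign, ← prod_mul_distrib]
    refine prod_nonneg fun i hi ↦ ?_
    have hi := mem_range.1 hi
    have := (one_le_div (hx i (hi.trans_le hk))).2 (hlt i hi)
    rw [hfactor]
    linarith
  · have hi := mem_Ico.1 hi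
    have := (div_le_one (hx i hi.2)).2 (hge i hi.1 hi.2)
    rw [hfactor]
    linarith

/-- The polynomial `f` equals `∏ i < N, (1 - X / y i)` for positive roots `y i` with
`y i ≤ p * y j` whenever `i < j`: for `p < 1` each root exceeds the previous one by a factor of at
least `p⁻¹`. Multiplying the coefficients by suitable `q`-factorial ratios preserves this. -/
def HasSeparatedPosRoots (p : ℝ) (N : ℕ) (f : ℝ[X]) : Prop :=
  ∃ y : ℕ → ℝ, (∀ i < N, 0 < y i) ∧ (∀ i j, i < j → j < N → y i ≤ p * y j) ∧
    f = ∏ i ∈ range N, (1 - C (y i)⁻¹ * X)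

namespace HasSeparatedPosRoots

theorem prod_one_sub_C_pow_mul_X {p : ℝ} (hp0 : 0 < p) (hp1 : p ≤ 1) (N : ℕ) :
    HasSeparatedPosRoots p N (∏ i ∈ range N, (1 - C (p ^ i) * X)) := by
  refine ⟨fun i ↦ (p ^ i)⁻¹, fun i _ ↦ by positivity, fun i j hij _ ↦ ?_, by simp only [inv_inv]⟩
  calc (p ^ i)⁻¹ = p * (p ^ (i + 1))⁻¹ := by field_simp; ring
    _ ≤ p * (p ^ j)⁻¹ := by
      gcongr ?_ * ?_
      exact inv_anti₀ (by positivity) (pow_le_pow_of_le_one hp0.le hp1 hij)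

theorem logDerivNonpos {p : ℝ} {N : ℕ} {f : ℝ[X]} (hf : HasSeparatedPosRoots p N f) :
    LogDerivNonpos f := by
  obtain ⟨y, hy, -, rfl⟩ := hf
  exact LogDerivNonpos.coe_prod_one_sub_C_inv_mul_X fun i hi ↦ hy i (mem_range.1 hi)

theorem le_of_le {p : ℝ} (hp1 : p ≤ 1) {N : ℕ} {x : ℕ → ℝ} (hx : ∀ i < N, 0 < x i)
    (hsep : ∀ i j, i < j → j < N → x i ≤ p * x j) {i j : ℕ} (hij : i ≤ j) (hj : j < N) :
    x i ≤ x j := by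
  rcases hij.eq_or_lt with rfl | hij
  exacts [le_rfl, (hsep i j hij hj).trans (mul_le_of_le_one_left (hx j hj).le hp1)]

theorem neg_one_pow_mul_eval_mul_nonneg {p : ℝ} (hp1 : p ≤ 1) {N : ℕ} {x : ℕ → ℝ}
    (hx : ∀ i < N, 0 < x i) (hsep : ∀ i j, i < j → j < N → x i ≤ p * x j) {k : ℕ} (hk : k < N) :
    0 ≤ (-1) ^ k * (∏ i ∈ range N, (1 - C (x i)⁻¹ * X)).eval (p * x k) :=
  neg_one_pow_mul_eval_prod_nonneg hk.le hx (fun i hi ↦ hsep i k hi hk) fun _ hki hi ↦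
    (mul_le_of_le_one_left (hx k hk).le hp1).trans (le_of_le hp1 hx hsep hki hi)

theorem neg_one_pow_mul_eval_div_nonneg {p : ℝ} (hp0 : 0 < p) (hp1 : p ≤ 1) {N : ℕ} {x : ℕ → ℝ}
    (hx : ∀ i < N, 0 < x i) (hsep : ∀ i j, i < j → j < N → x i ≤ p * x j) {k : ℕ} (hk : k < N) :
    0 ≤ (-1) ^ (k + 1) * (∏ i ∈ range N, (1 - C (x i)⁻¹ * X)).eval (x k / p) :=
  neg_one_pow_mul_eval_prod_nonneg hk hx
    (fun _ hi ↦ (le_of_le hp1 hx hsep (Nat.lt_succ_iff.1 hi) hk).trans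
      (le_div_self (hx k hk).le hp0 hp1))
    fun i hki hi ↦ (div_le_iff₀' hp0).2 (hsep k i hki hi)

theorem of_alternating {p : ℝ} (hp0 : 0 < p) (hp1 : p < 1) {N : ℕ} {x : ℕ → ℝ}
    (hx : ∀ i < N, 0 < x i) (hsep : ∀ i j, i < j → j < N → x i ≤ p * x j) {f : ℝ[X]}
    (hdeg : f.natDegree ≤ N) (hf0 : f.eval 0 = 1) (hfr : ∀ k < N, (-1) ^ k * f.eval (x k) ≤ 0)
    (hfl : ∀ k < N, 0 ≤ (-1) ^ (k + 1) * f.eval (x k / p)) : HasSeparatedPosRoots p N f := by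
  let l : ℕ → ℝ := fun k ↦ k.casesOn 0 fun j ↦ x j / p
  have hl : ∀ k < N, 0 ≤ l k := by
    rintro (_ | k) hk
    exacts [le_rfl, (div_pos (hx k (Nat.lt_of_succ_lt hk)) hp0).le]
  have hlr : ∀ k < N, l k ≤ x k := by
    rintro (_ | k) hk
    exacts [(hx 0 hk).le, (div_le_iff₀' hp0).2 (hsep k (k + 1) k.lt_succ_self hk)]
  have hrl : ∀ i j, i < j → j < N → x i < l j := by
    rintro i (_ | j) hij hj
    · exact absurd hij (Nat.not_lt_zero i)
    · have hj := Nat.lt_of_succ_lt hj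
      exact (le_of_le hp1.le hx hsep (Nat.lt_succ_iff.1 hij) hj).trans_lt
        ((lt_div_iff₀ hp0).2 (mul_lt_of_lt_one_right (hx j hj) hp1))
  obtain ⟨y, hy, hfy⟩ := exists_pos_roots_of_alternating hdeg hf0 hl hlr hrl (by
    rintro (_ | k) hk
    exacts [by simp [l, hf0], hfl k (Nat.lt_of_succ_lt hk)]) hfr
  refine ⟨y, fun i hi ↦ (hy i hi).1, fun i j hij hj ↦ ?_, hfy⟩
  obtain _ | j := j
  · exact absurd hij (Nat.not_lt_zero i)
  calc y i ≤ x i := (hy i (hij.trans hj)).2.2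
    _ ≤ x j := le_of_le hp1.le hx hsep (Nat.lt_succ_iff.1 hij) (Nat.lt_of_succ_lt hj)
    _ ≤ p * y (j + 1) := (div_le_iff₀' hp0).1 (hy (j + 1) hj).2.1

-- The new polynomial has the sign of `f` at `x k / p`, because `f (x k) = 0`, and the sign of
-- `-f (p * x k)` at `x k`.
theorem sub_comp {p c : ℝ} (hp0 : 0 < p) (hp1 : p < 1) (hc0 : 0 ≤ c) (hc1 : c < 1) {N : ℕ}
    {f : ℝ[X]} (hf : HasSeparatedPosRoots p N f) :
    HasSeparatedPosRoots p N (C (1 - c)⁻¹ * (f - C c * f.comp (C p * X))) := by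
  obtain ⟨x, hx, hsep, hf⟩ := hf
  have hc : 0 < (1 - c)⁻¹ := inv_pos.2 (sub_pos.2 hc1)
  have hroot : ∀ i < N, f.eval (x i) = 0 := fun i hi ↦ by
    rw [hf, eval_prod, prod_eq_zero (mem_range.2 hi) (by simp [(hx i hi).ne'])]
  have heval (t : ℝ) : (C (1 - c)⁻¹ * (f - C c * f.comp (C p * X))).eval t =
      (1 - c)⁻¹ * (f.eval t - c * f.eval (p * t)) := by
    simp [eval_comp]
  refine of_alternating hp0 hp1 hx hsep ?_ ?_ (fun k hk ↦ ?_) fun k hk ↦ ?_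
  · have hdeg : f.natDegree ≤ N := by
      simpa only [hf, card_range] using
        natDegree_prod_one_sub_C_mul_X_le (range N) fun i ↦ (x i)⁻¹
    refine (natDegree_C_mul_le _ _).trans ((natDegree_sub_le _ _).trans (max_le hdeg ?_))
    refine (natDegree_C_mul_le _ _).trans (natDegree_comp_le.trans ?_)
    exact (Nat.mul_le_mul hdeg ((natDegree_C_mul_le p X).trans natDegree_X_le)).trans_eq (mul_one N)
  · have hf0 : f.eval 0 = 1 := by simp [hf, eval_prod]
    rw [heval, mul_zero, hf0, mul_one, inv_mul_cancel₀ (sub_pos.2 hc1).ne']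
  · have hsign := neg_one_pow_mul_eval_mul_nonneg hp1.le hx hsep hk
    rw [← hf] at hsign
    calc _ = -((1 - c)⁻¹ * (c * ((-1) ^ k * f.eval (p * x k)))) := by
          rw [heval, hroot k hk]; ring
      _ ≤ 0 := neg_nonpos.2 (by positivity)
  · have hsign := neg_one_pow_mul_eval_div_nonneg hp0 hp1.le hx hsep hk
    rw [← hf] at hsign
    rw [heval, mul_div_cancel₀ _ hp0.ne', hroot k hk, mul_zero, sub_zero, mul_left_comm]
    exact mul_nonneg hc.le hsign

end HasSeparatedPosRoots

theorem coeff_prod_one_sub_C_pow_mul_X {K : Type*} [Field K] {p : K} (hp : ∀ k, 1 - p ^ (k + 1) ≠ 0)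
    (N n : ℕ) :
    (∏ i ∈ range N, (1 - C (p ^ i) * X)).coeff n =
      ∏ k ∈ range n, (p ^ N - p ^ k) / (1 - p ^ (k + 1)) := by
  induction n with
  | zero => simp [coeff_zero_eq_eval_zero, eval_prod]
  | succ n ih =>
    set E : K[X] := ∏ i ∈ range N, (1 - C (p ^ i) * X) with hE
    have hfun : (1 - X) * E.comp (C p * X) = (1 - C (p ^ N) * X) * E := by
      calc _ = ∏ i ∈ range (N + 1), (1 - C (p ^ i) * X) := by
            rw [prod_range_succ', hE, Polynomial.prod_comp, mul_comm]
            simp [pow_succ, mul_assoc]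
        _ = _ := by rw [prod_range_succ, mul_comm]
    have hcoeff := congrArg (coeff · (n + 1)) hfun
    simp only [sub_mul, one_mul, coeff_sub, comp_C_mul_X_coeff, mul_assoc, coeff_C_mul,
      coeff_X_mul] at hcoeff
    rw [prod_range_succ, ← ih, mul_div_assoc', eq_div_iff (hp n)]
    linear_combination -hcoeff

theorem HasSeparatedPosRoots.exists_coeff_eq {p b : ℝ} (hp0 : 0 < p) (hp1 : p < 1) (hb0 : 0 ≤ b)
    (hb1 : b < 1) {N : ℕ} {f : ℝ[X]} (hf : HasSeparatedPosRoots p N f) (M : ℕ) :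
    ∃ g : ℝ[X], HasSeparatedPosRoots p N g ∧ ∀ n, g.coeff n =
      f.coeff n * ∏ k ∈ range n, (1 - b * p ^ (M + k)) / (1 - b * p ^ k) := by
  have hlt (k : ℕ) : b * p ^ k < 1 :=
    (mul_le_of_le_one_right hb0 (pow_le_one₀ hp0.le hp1.le)).trans_lt hb1
  have hne (k : ℕ) : 1 - b * p ^ k ≠ 0 := (sub_pos.2 (hlt k)).ne'
  induction M with
  | zero => exact ⟨f, hf, fun n ↦ by simp [div_self (hne _)]⟩
  | succ M ih =>
    obtain ⟨g, hg, hgf⟩ := ih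
    refine ⟨_, hg.sub_comp hp0 hp1 (by positivity) (hlt M), fun n ↦ ?_⟩
    have hshift : (∏ k ∈ range n, (1 - b * p ^ (M + k))) * (1 - b * p ^ (M + n)) =
        (1 - b * p ^ M) * ∏ k ∈ range n, (1 - b * p ^ (M + 1 + k)) := by
      rw [← prod_range_succ fun k ↦ 1 - b * p ^ (M + k), prod_range_succ', add_zero, mul_comm]
      simp only [add_assoc, add_comm 1]
    simp only [coeff_C_mul, coeff_sub, comp_C_mul_X_coeff, hgf, prod_div_distrib]
    rw [inv_mul_eq_div, div_eq_iff (hne M)]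
    linear_combination f.coeff n / (∏ k ∈ range n, (1 - b * p ^ k)) * hshift

end RealRooted

section Limits

open Filter Topology PowerSeries
open scoped PowerSeries

theorem LogDerivNonpos.mk_prod_div {p b : ℝ} (hp0 : 0 < p) (hp1 : p < 1) (hb0 : 0 ≤ b)
    (hb1 : b < 1) : LogDerivNonpos (mk fun n ↦
      ∏ k ∈ Finset.range n, -(p ^ k / ((1 - p ^ (k + 1)) * (1 - b * p ^ k)))) := by
  have hp (k : ℕ) : 1 - p ^ (k + 1) ≠ 0 :=
    (sub_pos.2 (pow_lt_one₀ hp0.le hp1 k.succ_ne_zero)).ne'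
  choose g hg hcoeff using fun N ↦ HasSeparatedPosRoots.exists_coeff_eq hp0 hp1 hb0 hb1
    (HasSeparatedPosRoots.prod_one_sub_C_pow_mul_X hp0 hp1.le N) N
  simp only [coeff_prod_one_sub_C_pow_mul_X hp, ← Finset.prod_mul_distrib] at hcoeff
  refine of_tendsto (fun N ↦ (hg N).logDerivNonpos) (fun N ↦ by simp [hcoeff]) fun n ↦ ?_
  simp only [Polynomial.coeff_coe, hcoeff, coeff_mk]
  refine tendsto_finsetProd _ fun k _ ↦ ?_
  have hpow : Tendsto (fun N ↦ p ^ N) atTop (𝓝 0) :=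
    tendsto_pow_atTop_nhds_zero_of_lt_one hp0.le hp1
  have hlim := ((hpow.sub_const (p ^ k)).div_const (1 - p ^ (k + 1))).mul
    ((((hpow.mul_const (p ^ k)).const_mul b).const_sub 1).div_const (1 - b * p ^ k))
  simp only [← pow_add] at hlim
  convert hlim using 2
  rw [div_mul_div_comm, zero_mul, mul_zero, sub_zero, mul_one, zero_sub, neg_div]

end Limits

section AlternatingSums

open Finset

variable {K : Type*} [Field K] [LinearOrder K] [IsStrictOrderedRing K] {T : ℕ → K}

theorem sum_neg_one_pow_mul_mem_Icc (hT : ∀ j, 0 ≤ T j) (hanti : Antitone T) (n : ℕ) :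
    ∑ j ∈ range n, (-1) ^ j * T j ∈ Set.Icc 0 (T 0) := by
  induction n generalizing T with
  | zero => simpa using hT 0
  | succ n ih =>
    obtain ⟨h0, h1⟩ := ih (fun j ↦ hT (j + 1)) (hanti.comp_monotone fun _ _ ↦ Nat.succ_le_succ)
    rw [zero_add] at h1
    simp only [sum_range_succ', pow_succ, mul_neg_one, neg_mul, sum_neg_distrib, pow_zero, one_mul]
    exact ⟨by linarith [hanti zero_le_one], by linarith⟩

theorem neg_one_pow_mul_sum_mem_Icc (hT : ∀ j, 0 ≤ T j) {k : ℕ}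
    (hup : ∀ j < k, 2 * T j ≤ T (j + 1)) :
    (-1) ^ k * ∑ j ∈ range (k + 1), (-1) ^ j * T j ∈ Set.Icc (T k / 2) (T k) := by
  induction k with
  | zero => simpa using hT 0
  | succ k ih =>
    obtain ⟨h0, h1⟩ := ih fun j hj ↦ hup j (hj.trans k.lt_succ_self)
    have hrec : (-1) ^ (k + 1) * ∑ j ∈ range (k + 2), (-1) ^ j * T j =
        T (k + 1) - (-1) ^ k * ∑ j ∈ range (k + 1), (-1) ^ j * T j := by
      rw [sum_range_succ, mul_add, ← mul_assoc _ _ (T (k + 1)), ← pow_add,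
        (Even.add_self (k + 1)).neg_one_pow]
      ring
    rw [hrec]
    exact ⟨by linarith [hup k k.lt_succ_self], by linarith [hT k]⟩

theorem neg_one_pow_mul_sum_nonneg (hT : ∀ j, 0 ≤ T j) {k N : ℕ} (hk : k ≤ N)
    (hup : ∀ j < k, 2 * T j ≤ T (j + 1)) (hdown : ∀ j, k ≤ j → 2 * T (j + 1) ≤ T j) :
    0 ≤ (-1) ^ k * ∑ j ∈ range (N + 1), (-1) ^ j * T j := by
  obtain ⟨d, rfl⟩ := Nat.exists_eq_add_of_le hk
  have hhead := neg_one_pow_mul_sum_mem_Icc hT hup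
  have hanti : Antitone fun j ↦ T (k + 1 + j) := antitone_nat_of_succ_le fun j ↦ by
    have := hdown (k + 1 + j) (by omega)
    rw [← add_assoc]
    linarith [hT (k + 1 + j + 1)]
  have htail := sum_neg_one_pow_mul_mem_Icc (fun j ↦ hT (k + 1 + j)) hanti d
  have hsign (j : ℕ) : (-1 : K) ^ k * (-1) ^ (k + 1 + j) = -(-1) ^ j := by
    rw [← pow_add, ← add_assoc, ← add_assoc, pow_add, pow_succ, Even.neg_one_pow ⟨k, rfl⟩]
    ring
  have hsplit : (-1) ^ k * ∑ j ∈ range (k + d + 1), (-1) ^ j * T j =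
      (-1) ^ k * ∑ j ∈ range (k + 1), (-1) ^ j * T j -
        ∑ j ∈ range d, (-1) ^ j * T (k + 1 + j) := by
    rw [add_right_comm, sum_range_add, mul_add, sub_eq_add_neg, ← sum_neg_distrib,
      mul_sum (range d)]
    simp only [← mul_assoc, hsign, neg_mul]
  rw [hsplit]
  linarith [hhead.1, htail.2, hdown k le_rfl]

end AlternatingSums

section Hutchinson

open Polynomial Finset

theorem neg_one_pow_mul_eval_trunc_nonneg {u : ℕ → ℝ} (hu : ∀ k, 0 < u k) {t : ℝ} (ht : 0 ≤ t)
    {k N : ℕ} (hk : k ≤ N) (hup : ∀ j < k, 2 ≤ u j * t) (hdown : ∀ j, k ≤ j → u j * t ≤ 1 / 2) :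
    0 ≤ (-1) ^ k *
      (PowerSeries.trunc (N + 1) (PowerSeries.mk fun n ↦ ∏ i ∈ range n, -u i)).eval t := by
  have hT (j : ℕ) : 0 ≤ ∏ i ∈ range j, u i * t :=
    prod_nonneg fun i _ ↦ mul_nonneg (hu i).le ht
  have hterm (j : ℕ) : (∏ i ∈ range j, -u i) * t ^ j = (-1) ^ j * ∏ i ∈ range j, u i * t := by
    rw [prod_neg, prod_mul_distrib, prod_const, card_range, mul_assoc]
  rw [eval, PowerSeries.eval₂_trunc_eq_sum_range]
  simp only [PowerSeries.coeff_mk, RingHom.id_apply, hterm]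
  refine neg_one_pow_mul_sum_nonneg hT hk (fun j hj ↦ ?_) fun j hj ↦ ?_
  · rw [prod_range_succ, mul_comm]
    exact mul_le_mul_of_nonneg_left (hup j hj) (hT j)
  · have := mul_le_mul_of_nonneg_left (hdown j hj) (hT j)
    rw [prod_range_succ]
    linarith

-- Hutchinson's criterion: on `[2 / u (k - 1), 1 / (2 * u k)]` the `k`-th term outweighs its
-- neighbours by a factor of two, so the truncations have the sign `(-1) ^ k` there.
theorem exists_pos_roots_trunc {u : ℕ → ℝ} (hu : ∀ k, 0 < u k) (hlt : ∀ k, 4 * u (k + 1) < u k)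
    (N : ℕ) : ∃ y : ℕ → ℝ, (∀ k < N, 0 < y k) ∧
      PowerSeries.trunc (N + 1) (PowerSeries.mk fun n ↦ ∏ i ∈ range n, -u i) =
        ∏ i ∈ range N, (1 - C (y i)⁻¹ * X) := by
  have hanti : StrictAnti u := strictAnti_nat_of_succ_lt fun k ↦ by linarith [hlt k, hu (k + 1)]
  have hfour {i j : ℕ} (hij : i < j) : 4 * u j < u i :=
    (mul_le_mul_of_nonneg_left (hanti.antitone hij) zero_le_four).trans_lt (hlt i)
  have h2u (k : ℕ) : 0 < 2 * u k := mul_pos two_pos (hu k)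
  have hl (k : ℕ) : 0 ≤ 1 / (2 * u k) := (one_div_pos.2 (h2u k)).le
  set f := PowerSeries.trunc (N + 1) (PowerSeries.mk fun n ↦ ∏ i ∈ range n, -u i)
  have hfl : ∀ k < N, 0 ≤ (-1) ^ k * f.eval (1 / (2 * u k)) := fun k hk ↦
    neg_one_pow_mul_eval_trunc_nonneg hu (hl k) hk.le
      (fun j hj ↦ by rw [mul_one_div, le_div_iff₀ (h2u k)]; linarith [hfour hj])
      (fun j hj ↦ by
        rw [mul_one_div, div_le_div_iff₀ (h2u k) two_pos]; linarith [hanti.antitone hj])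
  have hfr : ∀ k < N, (-1) ^ k * f.eval (2 / u k) ≤ 0 := fun k hk ↦ by
    have := neg_one_pow_mul_eval_trunc_nonneg hu (div_pos two_pos (hu k)).le hk
      (fun j hj ↦ by
        rw [mul_div_assoc', le_div_iff₀ (hu k)]
        linarith [hanti.antitone (Nat.lt_succ_iff.1 hj)])
      (fun j hj ↦ by rw [mul_div_assoc', div_le_div_iff₀ (hu k) two_pos]; linarith [hfour hj])
    rw [pow_succ] at this
    linarith
  obtain ⟨y, hy, hfy⟩ := exists_pos_roots_of_alternating
    (Nat.lt_succ_iff.1 (PowerSeries.natDegree_trunc_lt _ N))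
    (by rw [← coeff_zero_eq_eval_zero, PowerSeries.coeff_trunc]; simp) (fun k _ ↦ hl k)
    (fun k _ ↦ by rw [div_le_div_iff₀ (h2u k) (hu k)]; linarith [hu k])
    (fun i j hij _ ↦ by rw [div_lt_div_iff₀ (hu i) (h2u j)]; linarith [hfour hij]) hfl hfr
  exact ⟨y, fun k hk ↦ (hy k hk).1, hfy⟩

open Filter in
theorem LogDerivNonpos.mk_prod_neg {u : ℕ → ℝ} (hu : ∀ k, 0 < u k)
    (hlt : ∀ k, 4 * u (k + 1) < u k) :
    LogDerivNonpos (PowerSeries.mk fun n ↦ ∏ k ∈ range n, -u k) := by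
  set F : PowerSeries ℝ := PowerSeries.mk fun n ↦ ∏ k ∈ range n, -u k with hF
  refine of_tendsto (F := fun N ↦ PowerSeries.trunc (N + 1) F) (fun N ↦ ?_) (fun N ↦ ?_) fun n ↦ ?_
  · obtain ⟨y, hy, hFy⟩ := exists_pos_roots_trunc hu hlt N
    rw [hFy]
    exact coe_prod_one_sub_C_inv_mul_X fun i hi ↦ hy i (mem_range.1 hi)
  · simp [coeff_coe, PowerSeries.coeff_trunc, hF]
  · refine tendsto_const_nhds.congr' ((eventually_ge_atTop n).mono fun N hN ↦ ?_)
    simp only [coeff_coe]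
    rw [PowerSeries.coeff_trunc, if_pos (Nat.lt_succ_of_le hN)]

end Hutchinson

section SeriesSum

open PowerSeries
open scoped PowerSeries

variable {𝕜 : Type*} [NormedField 𝕜]

/-- Absolute convergence of the power series `F` at the radius `r`. -/
def AbsSummableAt (F : 𝕜⟦X⟧) (r : ℝ) : Prop := Summable fun n ↦ ‖coeff n F‖ * r ^ n

/-- The value at `z` of the power series `F`; by the convention for `tsum` it is `0` wherever the
series diverges. -/
noncomputable def seriesSum (F : 𝕜⟦X⟧) (z : 𝕜) : 𝕜 := ∑' n, coeff n F * z ^ n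

/-- The power series `F` has infinite radius of convergence. -/
def IsEntire (F : 𝕜⟦X⟧) : Prop := ∀ r, 0 ≤ r → AbsSummableAt F r

variable {F G P : 𝕜⟦X⟧} {z : 𝕜} {r s : ℝ}

theorem absSummableAt_zero : AbsSummableAt F 0 :=
  summable_of_ne_finset_zero (s := {0}) fun n hn ↦ by
    rw [zero_pow (by simpa using hn), mul_zero]

theorem norm_coeff_mul_pow_le (F : 𝕜⟦X⟧) (hz : ‖z‖ ≤ r) (n : ℕ) :
    ‖coeff n F * z ^ n‖ ≤ ‖coeff n F‖ * r ^ n := by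
  rw [norm_mul, norm_pow]
  gcongr

theorem AbsSummableAt.summable_norm (hF : AbsSummableAt F r) (hz : ‖z‖ ≤ r) :
    Summable fun n ↦ ‖coeff n F * z ^ n‖ :=
  Summable.of_nonneg_of_le (fun _ ↦ norm_nonneg _) (norm_coeff_mul_pow_le F hz) hF

theorem AbsSummableAt.mono (hF : AbsSummableAt F s) (hr : 0 ≤ r) (hrs : r ≤ s) :
    AbsSummableAt F r :=
  Summable.of_nonneg_of_le (fun _ ↦ by positivity) (fun n ↦ by gcongr) hF

theorem AbsSummableAt.continuousOn [CompleteSpace 𝕜] (hF : AbsSummableAt F r) :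
    ContinuousOn (seriesSum F) (Metric.closedBall 0 r) :=
  continuousOn_tsum (fun _ ↦ by fun_prop) hF fun n _ hz ↦
    norm_coeff_mul_pow_le F (mem_closedBall_zero_iff.1 hz) n

theorem seriesSum_zero : seriesSum F 0 = coeff 0 F := by
  rw [seriesSum, tsum_eq_single 0 fun n hn ↦ by rw [zero_pow hn, mul_zero], pow_zero, mul_one]

theorem seriesSum_neg (F : 𝕜⟦X⟧) (z : 𝕜) : seriesSum (-F) z = -seriesSum F z := by
  simp only [seriesSum, map_neg, neg_mul, tsum_neg]

theorem coeff_mul_mul_pow (F G : 𝕜⟦X⟧) (z : 𝕜) (n : ℕ) :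
    coeff n (F * G) * z ^ n = ∑ ij ∈ Finset.HasAntidiagonal.antidiagonal n,
      coeff ij.1 F * z ^ ij.1 * (coeff ij.2 G * z ^ ij.2) := by
  rw [coeff_mul, Finset.sum_mul]
  refine Finset.sum_congr rfl fun ij hij ↦ ?_
  rw [← Finset.HasAntidiagonal.mem_antidiagonal.1 hij, pow_add]
  ring

theorem AbsSummableAt.seriesSum_mul [CompleteSpace 𝕜] (hF : AbsSummableAt F ‖z‖)
    (hG : AbsSummableAt G ‖z‖) : seriesSum (F * G) z = seriesSum F z * seriesSum G z := by
  simp only [seriesSum, coeff_mul_mul_pow]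
  exact (tsum_mul_tsum_eq_tsum_sum_antidiagonal_of_summable_norm
    (hF.summable_norm le_rfl) (hG.summable_norm le_rfl)).symm

theorem AbsSummableAt.mul [CompleteSpace 𝕜] (hF : AbsSummableAt F ‖z‖) (hG : AbsSummableAt G ‖z‖) :
    AbsSummableAt (F * G) ‖z‖ := by
  simpa only [AbsSummableAt, ← norm_pow, ← norm_mul, ← coeff_mul_mul_pow] using
    summable_norm_sum_mul_antidiagonal_of_summable_norm
      (hF.summable_norm le_rfl) (hG.summable_norm le_rfl)

theorem seriesSum_derivative_eq_neg_mul [CompleteSpace 𝕜] (hPF : d⁄dX 𝕜 F = -(P * F))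
    (hP : AbsSummableAt P ‖z‖) (hF : AbsSummableAt F ‖z‖) :
    seriesSum (d⁄dX 𝕜 F) z = -(seriesSum P z * seriesSum F z) := by
  rw [hPF, seriesSum_neg, hP.seriesSum_mul hF]

end SeriesSum

section ComplexSeries

open PowerSeries Metric
open scoped PowerSeries

variable {F P : ℂ⟦X⟧} {r R : ℝ}

theorem absSummableAt_map_ofRealHom {F : ℝ⟦X⟧} :
    AbsSummableAt (F.map Complex.ofRealHom) r ↔ AbsSummableAt F r := by
  simp [AbsSummableAt]

theorem IsEntire.map_ofRealHom {F : ℝ⟦X⟧} (hF : IsEntire F) :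
    IsEntire (F.map Complex.ofRealHom) :=
  fun r hr ↦ absSummableAt_map_ofRealHom.2 (hF r hr)

theorem seriesSum_map_ofRealHom (F : ℝ⟦X⟧) (x : ℝ) :
    seriesSum (F.map Complex.ofRealHom) (x : ℂ) = (seriesSum F x : ℝ) := by
  simp [seriesSum, Complex.ofReal_tsum]

theorem derivative_map_ofRealHom (F : ℝ⟦X⟧) :
    d⁄dX ℂ (F.map Complex.ofRealHom) = (d⁄dX ℝ F).map Complex.ofRealHom := by
  ext n
  simp [coeff_derivative]

theorem IsEntire.hasDerivAt (hF : IsEntire F) (z : ℂ) :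
    HasDerivAt (seriesSum F) (seriesSum (d⁄dX ℂ F) z) z := by
  have hR : (0 : ℝ) ≤ ‖z‖ + 1 := by positivity
  have hz : z ∈ ball (0 : ℂ) (‖z‖ + 1) := by simp
  have hdiff (n : ℕ) : DifferentiableOn ℂ (fun w ↦ coeff n F * w ^ n) (ball 0 (‖z‖ + 1)) := by
    fun_prop
  have hle (n : ℕ) (w : ℂ) (hw : w ∈ ball (0 : ℂ) (‖z‖ + 1)) :
      ‖coeff n F * w ^ n‖ ≤ ‖coeff n F‖ * (‖z‖ + 1) ^ n :=
    norm_coeff_mul_pow_le F (mem_ball_zero_iff.1 hw).le n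
  have hderiv : seriesSum (d⁄dX ℂ F) z = deriv (seriesSum F) z := by
    have h := Complex.hasSum_deriv_of_summable_norm (hF _ hR) hdiff isOpen_ball hle hz
    rw [← hasSum_nat_add_iff' 1] at h
    have hfun : seriesSum F = fun w ↦ ∑' n, coeff n F * w ^ n := rfl
    simpa [hfun, seriesSum, coeff_derivative, mul_assoc] using h.tsum_eq
  rw [hderiv]
  exact ((Complex.differentiableOn_tsum_of_summable_norm (hF _ hR) hdiff isOpen_ball
    hle).differentiableAt (isOpen_ball.mem_nhds hz)).hasDerivAt

theorem IsEntire.derivative (hF : IsEntire F) : IsEntire (d⁄dX ℂ F) := fun r hr ↦ by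
  have hsum := (summable_nat_add_iff 1).2 (hF (2 * r + 1) (by positivity))
  refine Summable.of_nonneg_of_le (fun n ↦ by positivity) (fun n ↦ ?_) hsum
  have hn : (n + 1 : ℝ) ≤ 2 ^ n := by exact_mod_cast Nat.lt_two_pow_self
  have hnorm : ‖(n + 1 : ℂ)‖ = n + 1 := by exact_mod_cast Complex.norm_natCast (n + 1)
  calc ‖coeff n (d⁄dX ℂ F)‖ * r ^ n = ‖coeff (n + 1) F‖ * ((n + 1) * r ^ n) := by
        rw [coeff_derivative, norm_mul, hnorm, mul_assoc]
    _ ≤ ‖coeff (n + 1) F‖ * (2 * r + 1) ^ (n + 1) := by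
        gcongr
        calc (n + 1) * r ^ n ≤ 2 ^ n * r ^ n := by gcongr
          _ = (2 * r) ^ n := (mul_pow 2 r n).symm
          _ ≤ (2 * r + 1) ^ n := by gcongr; linarith
          _ ≤ (2 * r + 1) ^ (n + 1) := pow_le_pow_right₀ (by linarith) n.le_succ

theorem IsEntire.hasDerivAt_real {F : ℝ⟦X⟧} (hF : IsEntire F) (x : ℝ) :
    HasDerivAt (seriesSum F) (seriesSum (d⁄dX ℝ F) x) x := by
  simpa only [derivative_map_ofRealHom, seriesSum_map_ofRealHom, Complex.ofReal_re] using
    (hF.map_ofRealHom.hasDerivAt x).real_of_complex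

theorem eq_zero_of_norm_deriv_le_mul_norm {E : Type*} [NormedAddCommGroup E] [NormedSpace ℂ E]
    {f f' : ℂ → E} {s : Set ℂ} {K : ℝ} (hs : Convex ℝ s) (hf : ∀ z ∈ s, HasDerivAt f (f' z) z)
    (hbound : ∀ z ∈ s, ‖f' z‖ ≤ K * ‖f z‖) {z w : ℂ} (hz : z ∈ s) (hw : w ∈ s) (hfz : f z = 0) :
    f w = 0 := by
  have hmem {t : ℝ} (ht : t ∈ Set.Icc (0 : ℝ) 1) : AffineMap.lineMap z w t ∈ s :=
    hs.lineMap_mem hz hw ht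
  have hderiv {t : ℝ} (ht : t ∈ Set.Icc (0 : ℝ) 1) :
      HasDerivAt (fun t : ℝ ↦ f (AffineMap.lineMap z w t))
        ((w - z) • f' (AffineMap.lineMap z w t)) t :=
    (hf _ (hmem ht)).scomp t AffineMap.hasDerivAt_lineMap
  have h := eq_zero_of_abs_deriv_le_mul_abs_self_of_eq_zero_right (K := ‖w - z‖ * K)
    (fun t ht ↦ (hderiv ht).continuousAt.continuousWithinAt)
    (fun t ht ↦ (hderiv (Set.Ico_subset_Icc_self ht)).hasDerivWithinAt) (by simpa using hfz)
    (fun t ht ↦ by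
      rw [norm_smul, mul_assoc]
      exact mul_le_mul_of_nonneg_left (hbound _ (hmem (Set.Ico_subset_Icc_self ht)))
        (norm_nonneg _)) 1 (by simp)
  simpa using h

theorem AbsSummableAt.seriesSum_ne_zero (hF : IsEntire F) (hF0 : coeff 0 F ≠ 0)
    (hPF : d⁄dX ℂ F = -(P * F)) (hP : AbsSummableAt P r) {z : ℂ} (hz : ‖z‖ ≤ r) :
    seriesSum F z ≠ 0 := by
  intro hFz
  have hbound : ∀ w ∈ closedBall (0 : ℂ) r,
      ‖seriesSum (d⁄dX ℂ F) w‖ ≤ (∑' n, ‖coeff n P‖ * r ^ n) * ‖seriesSum F w‖ := fun w hw ↦ by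
    have hw := mem_closedBall_zero_iff.1 hw
    rw [seriesSum_derivative_eq_neg_mul hPF (hP.mono (norm_nonneg w) hw) (hF _ (norm_nonneg w)),
      norm_neg, norm_mul]
    gcongr
    exact tsum_of_norm_bounded hP.hasSum (norm_coeff_mul_pow_le P hw)
  refine hF0 ?_
  rw [← seriesSum_zero]
  exact eq_zero_of_norm_deriv_le_mul_norm (convex_closedBall 0 r) (fun w _ ↦ hF.hasDerivAt w)
    hbound (mem_closedBall_zero_iff.2 hz)
    (mem_closedBall_self ((norm_nonneg z).trans hz)) hFz

theorem exists_seriesSum_eqOn_of_differentiableOn {f : ℂ → ℂ} (hR : 0 < R)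
    (hf : DifferentiableOn ℂ f (closedBall 0 R)) :
    ∃ Q : ℂ⟦X⟧, (∀ z : ℂ, ‖z‖ < R → AbsSummableAt Q ‖z‖) ∧
      Set.EqOn f (seriesSum Q) (ball 0 R) := by
  lift R to NNReal using hR.le
  have hps := hf.hasFPowerSeriesOnBall (by exact_mod_cast hR)
  set p := cauchyPowerSeries f 0 R
  refine ⟨mk p.coeff, fun z hz ↦ ?_, fun z hz ↦ ?_⟩
  · have hz : z ∈ eball (0 : ℂ) p.radius :=
      eball_subset_eball hps.r_le (by simpa [eball_coe] using hz)
    simpa [AbsSummableAt, FormalMultilinearSeries.apply_eq_pow_smul_coeff, mul_comm] using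
      p.summable_norm_apply hz
  · have h := hps.hasSum (y := z) (by simpa only [eball_coe] using hz)
    simpa [seriesSum, FormalMultilinearSeries.apply_eq_pow_smul_coeff, mul_comm] using
      h.tsum_eq.symm

theorem AbsSummableAt.hasFPowerSeriesAt (hR : 0 < R) (hF : AbsSummableAt F R) :
    HasFPowerSeriesAt (seriesSum F) (FormalMultilinearSeries.ofScalars ℂ fun n ↦ coeff n F) 0 := by
  rw [hasFPowerSeriesAt_iff]
  filter_upwards [ball_mem_nhds (0 : ℂ) hR] with z hz
  simpa [FormalMultilinearSeries.coeff_ofScalars, mul_comm, seriesSum] using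
    (hF.summable_norm (mem_ball_zero_iff.1 hz).le).of_norm.hasSum

theorem eq_of_seriesSum_eqOn {F G : ℂ⟦X⟧} (hR : 0 < R) (hF : AbsSummableAt F R)
    (hG : AbsSummableAt G R) (h : Set.EqOn (seriesSum F) (seriesSum G) (ball 0 R)) : F = G := by
  have hseries := (hF.hasFPowerSeriesAt hR).eq_formalMultilinearSeries
    ((hG.hasFPowerSeriesAt hR).congr (h.eventuallyEq_of_mem (ball_mem_nhds 0 hR)).symm)
  ext n
  simpa [FormalMultilinearSeries.coeff_ofScalars] using congrArg (·.coeff n) hseries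

-- Near `0` the coefficients of `P` are those of the quotient `-F' / F`, whose Taylor series
-- converges as far as `F` has no zeros.
theorem absSummableAt_of_seriesSum_ne_zero (hF : IsEntire F) (hPF : d⁄dX ℂ F = -(P * F))
    (hR : 0 < R) (hne : ∀ z ∈ closedBall (0 : ℂ) R, seriesSum F z ≠ 0) {z : ℂ} (hz : ‖z‖ < R) :
    AbsSummableAt P ‖z‖ := by
  have hdiff {G : ℂ⟦X⟧} (hG : IsEntire G) : DifferentiableOn ℂ (seriesSum G) (closedBall 0 R) :=
    fun w _ ↦ (hG.hasDerivAt w).differentiableAt.differentiableWithinAt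
  obtain ⟨Q, hQ, hQF⟩ := exists_seriesSum_eqOn_of_differentiableOn hR
    ((hdiff hF.derivative).neg.div (hdiff hF) hne)
  have hPF' : P * F = -(d⁄dX ℂ F) := by rw [hPF, neg_neg]
  have hPFsum : AbsSummableAt (P * F) (R / 2) := by
    simpa only [AbsSummableAt, hPF', map_neg, norm_neg] using hF.derivative (R / 2) (by positivity)
  have hQFsum : AbsSummableAt (Q * F) (R / 2) := by
    have hnorm : ‖((R / 2 : ℝ) : ℂ)‖ = R / 2 := Complex.norm_of_nonneg (by positivity)
    rw [← hnorm]
    exact (hQ _ (by rw [hnorm]; linarith)).mul (hF _ (norm_nonneg _))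
  have heqOn : Set.EqOn (seriesSum (P * F)) (seriesSum (Q * F)) (ball 0 (R / 2)) := fun w hw ↦ by
    have hw' : w ∈ ball (0 : ℂ) R := ball_subset_ball (by linarith) hw
    rw [(hQ w (mem_ball_zero_iff.1 hw')).seriesSum_mul (hF _ (norm_nonneg w)), ← hQF hw', hPF']
    exact (seriesSum_neg _ w).trans (div_mul_cancel₀ _ (hne w (ball_subset_closedBall hw'))).symm
  have hF0 : F ≠ 0 := by
    rintro rfl
    exact hne 0 (mem_closedBall_self hR.le) (by simp [seriesSum])
  have hPQ : P = Q :=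
    mul_right_cancel₀ hF0 (eq_of_seriesSum_eqOn (half_pos hR) hPFsum hQFsum heqOn)
  exact hPQ ▸ hQ z hz

theorem AbsSummableAt.exists_gt (hF : IsEntire F) (hF0 : coeff 0 F ≠ 0)
    (hPF : d⁄dX ℂ F = -(P * F)) (hr : 0 ≤ r) (hP : AbsSummableAt P r) :
    ∃ s > r, AbsSummableAt P s := by
  have hcont : Continuous (seriesSum F) :=
    continuous_iff_continuousAt.2 fun w ↦ (hF.hasDerivAt w).continuousAt
  obtain ⟨δ, hδ, hsub⟩ := (isCompact_closedBall (0 : ℂ) r).exists_thickening_subset_open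
    (isOpen_ne_fun hcont continuous_const : IsOpen {w | seriesSum F w ≠ 0})
    (fun w hw ↦ hP.seriesSum_ne_zero hF hF0 hPF (mem_closedBall_zero_iff.1 hw))
  rw [thickening_closedBall hδ hr] at hsub
  have hnorm : ‖((r + δ / 3 : ℝ) : ℂ)‖ = r + δ / 3 := Complex.norm_of_nonneg (by positivity)
  refine ⟨r + δ / 3, by linarith, ?_⟩
  rw [← hnorm]
  exact absSummableAt_of_seriesSum_ne_zero hF hPF (R := r + δ / 2) (by positivity)
    (fun w hw ↦ hsub (closedBall_subset_ball (by linarith) hw)) (by rw [hnorm]; linarith)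

end ComplexSeries

section NonnegSeries

open PowerSeries
open scoped PowerSeries

variable {P : ℝ⟦X⟧} {r s c : ℝ}

theorem AbsSummableAt.summable (hP : AbsSummableAt P r) (hr : 0 ≤ r) :
    Summable fun n ↦ coeff n P * r ^ n :=
  (AbsSummableAt.summable_norm hP (abs_of_nonneg hr).le).of_norm

theorem AbsSummableAt.mul_seriesSum_lt_mul_seriesSum (hP : ∀ n, 0 ≤ coeff n P)
    (hP0 : coeff 0 P ≠ 0) (hPs : AbsSummableAt P s) (hr : 0 ≤ r) (hrs : r < s) :
    r * seriesSum P r < s * seriesSum P s := by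
  have hPr := (hPs.mono hr hrs.le).summable hr
  have hle : seriesSum P r ≤ seriesSum P s := hPr.tsum_le_tsum
    (fun n ↦ mul_le_mul_of_nonneg_left (pow_le_pow_left₀ hr hrs.le n) (hP n))
    (hPs.summable (hr.trans hrs.le))
  have hpos : 0 < seriesSum P r := hPr.tsum_pos
    (fun n ↦ mul_nonneg (hP n) (pow_nonneg hr n)) 0
    (by simpa using (hP 0).lt_of_ne' hP0)
  exact mul_lt_mul hrs hle hpos (hr.trans hrs.le)

theorem AbsSummableAt.norm_seriesSum_map_le (hP : ∀ n, 0 ≤ coeff n P) {z : ℂ}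
    (hPz : AbsSummableAt P ‖z‖) :
    ‖seriesSum (P.map Complex.ofRealHom) z‖ ≤ seriesSum P ‖z‖ :=
  tsum_of_norm_bounded (hPz.summable (norm_nonneg z)).hasSum fun n ↦ by
    simp [abs_of_nonneg (hP n)]

theorem absSummableAt_of_sum_le (hP : ∀ n, 0 ≤ coeff n P) (hr : 0 ≤ r)
    (hle : ∀ n, ∑ i ∈ Finset.range n, coeff i P * r ^ i ≤ c) : AbsSummableAt P r := by
  simpa only [AbsSummableAt, Real.norm_of_nonneg (hP _)] using
    summable_of_sum_range_le (fun n ↦ mul_nonneg (hP n) (pow_nonneg hr n)) hle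

theorem exists_isGreatest_mul_sum_le (hP : ∀ n, 0 ≤ coeff n P) (hP0 : coeff 0 P ≠ 0) (hc : 0 ≤ c) :
    ∃ ρ, IsGreatest {r | 0 ≤ r ∧ ∀ n, r * ∑ i ∈ Finset.range n, coeff i P * r ^ i ≤ c} ρ := by
  set S := {r | 0 ≤ r ∧ ∀ n, r * ∑ i ∈ Finset.range n, coeff i P * r ^ i ≤ c} with hS
  have hclosed : IsClosed S := by
    simp only [hS, Set.ofPred_and, Set.ofPred_forall]
    exact isClosed_Ici.inter (isClosed_iInter fun n ↦ isClosed_le (by fun_prop) continuous_const)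
  have hbdd : BddAbove S := ⟨c / coeff 0 P, fun r hr ↦
    (le_div_iff₀ ((hP 0).lt_of_ne' hP0)).2 (by simpa using hr.2 1)⟩
  exact ⟨sSup S, hclosed.csSup_mem ⟨0, le_rfl, by simpa using hc⟩ hbdd, fun r ↦ le_csSup hbdd⟩

-- The largest `ρ` at which the partial sums of `r * P(r)` stay below `c` is a point of convergence;
-- by hypothesis `P` converges beyond it, where `r * P(r)` exceeds `c`.
theorem exists_mul_seriesSum_eq (hP : ∀ n, 0 ≤ coeff n P) (hP0 : coeff 0 P ≠ 0)
    (hext : ∀ r, 0 ≤ r → AbsSummableAt P r → ∃ s > r, AbsSummableAt P s) (hc : 0 < c) :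
    ∃ ρ, 0 < ρ ∧ AbsSummableAt P ρ ∧ ρ * seriesSum P ρ = c := by
  obtain ⟨ρ, ⟨hρ0, hρc⟩, hρmax⟩ := exists_isGreatest_mul_sum_le hP hP0 hc.le
  have hPρ : AbsSummableAt P ρ := by
    rcases hρ0.eq_or_lt with rfl | hρ0
    · exact absSummableAt_zero
    · exact absSummableAt_of_sum_le hP hρ0.le fun n ↦ (le_div_iff₀' hρ0).2 (hρc n)
  have hρle : ρ * seriesSum P ρ ≤ c :=
    le_of_tendsto' ((hPρ.summable hρ0).hasSum.tendsto_sum_nat.const_mul ρ) hρc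
  obtain ⟨s, hρs, hPs⟩ := hext ρ hρ0 hPρ
  have hs0 := hρ0.trans hρs.lt.le
  have hsle : c ≤ s * seriesSum P s := by
    by_contra! hlt
    refine (hρmax ⟨hs0, fun n ↦ ?_⟩).not_gt hρs
    exact (mul_le_mul_of_nonneg_left ((hPs.summable hs0).sum_le_tsum _
      fun i _ ↦ mul_nonneg (hP i) (pow_nonneg hs0 i)) hs0).trans hlt.le
  have hcont : ContinuousOn (fun r ↦ r * seriesSum P r) (Set.Icc ρ s) :=
    continuousOn_id.mul (hPs.continuousOn.mono fun r hr ↦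
      mem_closedBall_zero_iff.2 (abs_le.2 ⟨by linarith [hr.1], hr.2⟩))
  obtain ⟨x, hx, hxc⟩ := intermediate_value_Icc hρs.lt.le hcont ⟨hρle, hsle⟩
  refine ⟨x, (hρ0.trans hx.1).lt_of_ne' ?_, hPs.mono (hρ0.trans hx.1) hx.2, hxc⟩
  rintro rfl
  simp [hc.ne] at hxc

end NonnegSeries

section Starlike

open PowerSeries
open scoped PowerSeries

theorem radiusStarlike_eq {α ρ : ℝ} {f : ℂ → ℂ} (hρ : 0 < ρ)
    (hlt : ∀ z : ℂ, 0 < ‖z‖ → ‖z‖ < ρ → α < (z * deriv f z / f z).re)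
    (hle : (ρ * deriv f ρ / f ρ).re ≤ α) : radiusStarlike α f = ρ := by
  refine IsGreatest.csSup_eq ⟨⟨hρ, hlt⟩, fun r hr ↦ not_lt.1 fun hρr ↦ ?_⟩
  have hnorm : ‖(ρ : ℂ)‖ = ρ := Complex.norm_of_nonneg hρ.le
  exact (hr.2 ρ (by rwa [hnorm]) (by rwa [hnorm])).not_ge hle

theorem mul_deriv_div_eq_one_sub {F P : ℂ⟦X⟧} (hF : IsEntire F) (hPF : d⁄dX ℂ F = -(P * F))
    {c z : ℂ} (hc : c ≠ 0) (hz : z ≠ 0) (hPz : AbsSummableAt P ‖z‖) (hFz : seriesSum F z ≠ 0) :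
    z * deriv (fun w ↦ w * c * seriesSum F w) z / (z * c * seriesSum F z) =
      1 - z * seriesSum P z := by
  have hderiv := (((hasDerivAt_id z).mul_const c).mul (hF.hasDerivAt z)).deriv
  rw [seriesSum_derivative_eq_neg_mul hPF hPz (hF _ (norm_nonneg z))] at hderiv
  simp only [id, Pi.mul_def] at hderiv
  rw [hderiv]
  field_simp
  ring

section RealSeries

variable {F P : ℝ⟦X⟧} {α r : ℝ}

theorem derivative_map_ofRealHom_eq_neg_mul (hPF : d⁄dX ℝ F = -(P * F)) :
    d⁄dX ℂ (F.map Complex.ofRealHom) =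
      -(P.map Complex.ofRealHom * F.map Complex.ofRealHom) := by
  rw [derivative_map_ofRealHom, hPF, map_neg, map_mul]

theorem AbsSummableAt.seriesSum_map_ne_zero (hF : IsEntire F) (hF0 : coeff 0 F ≠ 0)
    (hPF : d⁄dX ℝ F = -(P * F)) (hP : AbsSummableAt P r) {z : ℂ} (hz : ‖z‖ ≤ r) :
    seriesSum (F.map Complex.ofRealHom) z ≠ 0 :=
  (absSummableAt_map_ofRealHom.2 hP).seriesSum_ne_zero hF.map_ofRealHom
    (by simpa using hF0) (derivative_map_ofRealHom_eq_neg_mul hPF) hz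

theorem AbsSummableAt.mul_derivative_eq_mul_iff (hF : IsEntire F) (hF0 : coeff 0 F ≠ 0)
    (hPF : d⁄dX ℝ F = -(P * F)) (hr : 0 ≤ r) (hP : AbsSummableAt P r) :
    r * seriesSum (d⁄dX ℝ F) r = (α - 1) * seriesSum F r ↔ r * seriesSum P r = 1 - α := by
  have hnorm : ‖r‖ = r := Real.norm_of_nonneg hr
  have hFr : seriesSum F r ≠ 0 := by
    have h := hP.seriesSum_map_ne_zero hF hF0 hPF (z := r) (Complex.norm_of_nonneg hr).le
    rwa [seriesSum_map_ofRealHom, Complex.ofReal_ne_zero] at h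
  rw [seriesSum_derivative_eq_neg_mul hPF (hnorm.symm ▸ hP) (hF _ (norm_nonneg r)),
    mul_neg, ← mul_assoc, ← neg_mul, mul_left_inj' hFr, neg_eq_iff_eq_neg, neg_sub]

theorem exists_radius_mul_seriesSum_eq (hF : IsEntire F) (hF0 : coeff 0 F ≠ 0)
    (hF1 : coeff 1 F ≠ 0) (hP : ∀ n, 0 ≤ coeff n P) (hPF : d⁄dX ℝ F = -(P * F)) (hα : α < 1) :
    ∃ ρ, 0 < ρ ∧ AbsSummableAt P ρ ∧ ρ * seriesSum P ρ = 1 - α ∧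
      ∀ r, 0 ≤ r → r < ρ → r * seriesSum P r < 1 - α := by
  have hP0 : coeff 0 P ≠ 0 := fun hP0 ↦ hF1 (by
    have h := congrArg (coeff 0) hPF
    rw [coeff_zero_eq_constantCoeff_apply] at hP0
    simpa [coeff_derivative, hP0] using h)
  obtain ⟨ρ, hρ0, hPρ, hρ⟩ := exists_mul_seriesSum_eq hP hP0 (fun r hr hPr ↦
    (AbsSummableAt.exists_gt hF.map_ofRealHom (by simpa using hF0)
      (derivative_map_ofRealHom_eq_neg_mul hPF) hr (absSummableAt_map_ofRealHom.2 hPr)).imp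
      fun _ ↦ And.imp_right absSummableAt_map_ofRealHom.1) (sub_pos.2 hα)
  exact ⟨ρ, hρ0, hPρ, hρ, fun r hr0 hr ↦
    hρ ▸ hPρ.mul_seriesSum_lt_mul_seriesSum hP hP0 hr0 hr⟩

-- With `P = -F' / F` and `f(z) = c * z * F(z)` we have `z * f'(z) / f(z) = 1 - z * P(z)`. As
-- `P` has nonnegative coefficients, the real part of this on `‖z‖ = r` is smallest at `z = r`.
theorem LogDerivNonpos.exists_isLeast_radiusStarlike (hlog : LogDerivNonpos F) (hF : IsEntire F)
    (hF0 : coeff 0 F ≠ 0) (hF1 : coeff 1 F ≠ 0) (hα : α < 1) {c : ℂ} (hc : c ≠ 0) :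
    ∃ ρ : ℝ, IsLeast {r | 0 < r ∧ r * seriesSum (d⁄dX ℝ F) r = (α - 1) * seriesSum F r} ρ ∧
      radiusStarlike α (fun z ↦ z * c * seriesSum (F.map Complex.ofRealHom) z) = ρ := by
  obtain ⟨P, hP, hPF⟩ := hlog
  obtain ⟨ρ, hρ0, hPρ, hρ, hρlt⟩ := exists_radius_mul_seriesSum_eq hF hF0 hF1 hP hPF hα
  have hroot {r : ℝ} (hr0 : 0 ≤ r) (hr : r ≤ ρ) :=
    (hPρ.mono hr0 hr).mul_derivative_eq_mul_iff hF hF0 hPF hr0 (α := α)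
  have hlogDeriv {z : ℂ} (hz0 : z ≠ 0) (hz : ‖z‖ ≤ ρ) :=
    mul_deriv_div_eq_one_sub hF.map_ofRealHom (derivative_map_ofRealHom_eq_neg_mul hPF) hc hz0
      (absSummableAt_map_ofRealHom.2 (hPρ.mono (norm_nonneg z) hz))
      (hPρ.seriesSum_map_ne_zero hF hF0 hPF hz)
  refine ⟨ρ, ⟨⟨hρ0, (hroot hρ0.le le_rfl).2 hρ⟩, fun r ⟨hr0, hr⟩ ↦ not_lt.1 fun hlt ↦ ?_⟩,
    radiusStarlike_eq hρ0 (fun z hz0 hz ↦ ?_) ?_⟩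
  · exact (hρlt r hr0.le hlt).ne ((hroot hr0.le hlt.le).1 hr)
  · have hre : (z * seriesSum (P.map Complex.ofRealHom) z).re < 1 - α := calc
      _ ≤ ‖z‖ * ‖seriesSum (P.map Complex.ofRealHom) z‖ := norm_mul z _ ▸ Complex.re_le_norm _
      _ ≤ ‖z‖ * seriesSum P ‖z‖ := by
        gcongr
        exact (hPρ.mono (norm_nonneg z) hz.le).norm_seriesSum_map_le hP
      _ < 1 - α := hρlt _ (norm_nonneg z) hz
    rw [hlogDeriv (norm_pos_iff.1 hz0) hz.le, Complex.sub_re, Complex.one_re]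
    linarith
  · rw [hlogDeriv (Complex.ofReal_ne_zero.2 hρ0.ne') (Complex.norm_of_nonneg hρ0.le).le,
      seriesSum_map_ofRealHom, ← Complex.ofReal_mul, hρ]
    simp

end RealSeries

end Starlike

section EntireSeries

open PowerSeries Filter Topology
open scoped PowerSeries

variable {𝕜 : Type*} [NormedField 𝕜]

theorem IsEntire.C_mul {F : 𝕜⟦X⟧} (hF : IsEntire F) (c : 𝕜) : IsEntire (C c * F) := fun r hr ↦ by
  simpa only [AbsSummableAt, coeff_C_mul, norm_mul, mul_assoc] using (hF r hr).mul_left ‖c‖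

theorem IsEntire.rescale {F : 𝕜⟦X⟧} (hF : IsEntire F) (s : 𝕜) :
    IsEntire (PowerSeries.rescale s F) := fun r hr ↦ by
  simpa only [AbsSummableAt, coeff_rescale, norm_mul, norm_pow, mul_pow, mul_assoc,
    mul_left_comm] using hF (‖s‖ * r) (by positivity)

theorem isEntire_mk_prod {u : ℕ → 𝕜} (hu : Tendsto u atTop (𝓝 0)) :
    IsEntire (mk fun n ↦ ∏ k ∈ Finset.range n, u k) := fun r hr ↦ by
  have hlim : Tendsto (fun n ↦ ‖u n‖ * r) atTop (𝓝 0) := by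
    simpa using hu.norm.mul_const r
  refine summable_of_ratio_norm_eventually_le one_half_lt_one
    ((hlim.eventually_le_const one_half_pos).mono fun n hn ↦ ?_)
  simp only [coeff_mk, Finset.prod_range_succ, norm_mul, norm_norm, pow_succ, norm_pow,
    Real.norm_of_nonneg hr]
  nlinarith [mul_le_mul_of_nonneg_left hn
    (by positivity : 0 ≤ ‖∏ k ∈ Finset.range n, u k‖ * r ^ n)]

end EntireSeries

section QGamma

variable {q a x : ℝ}

theorem multipliable_one_sub_mul_pow (hq : |q| < 1) (a : ℝ) :
    Multipliable fun k : ℕ ↦ 1 - a * q ^ k := by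
  simpa only [sub_eq_add_neg] using multipliable_one_add_of_summable
    ((summable_geometric_of_abs_lt_one hq).mul_left a).neg.norm

theorem qPochInf_eq_mul (hq : |q| < 1) (a : ℝ) :
    qPochInf a q = (1 - a) * qPochInf (a * q) q := by
  have hshift (k : ℕ) : 1 - a * q ^ (k + 1) = 1 - a * q * q ^ k := by rw [pow_succ']; ring
  have hmul : Multipliable fun k : ℕ ↦ 1 - a * q ^ (k + 1) := by
    simpa only [hshift] using multipliable_one_sub_mul_pow hq (a * q)
  rw [qPochInf, tprod_eq_zero_mul' (f := fun k ↦ 1 - a * q ^ k) hmul, pow_zero, mul_one]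
  simp only [hshift, qPochInf]

theorem qPochInf_ne_zero (hq0 : 0 < q) (hq1 : q < 1) (ha : a < 1) : qPochInf a q ≠ 0 := by
  have hfactor (k : ℕ) : 1 + -(a * q ^ k) ≠ 0 := by
    have := mul_pos (sub_pos.2 ha) (pow_pos hq0 k)
    have := pow_le_one₀ (n := k) hq0.le hq1.le
    exact (by linarith : 0 < 1 + -(a * q ^ k)).ne'
  simpa only [qPochInf, sub_eq_add_neg] using tprod_one_add_ne_zero_of_summable hfactor
    ((summable_geometric_of_lt_one hq0.le hq1).mul_left a).neg.norm

theorem qGamma_ne_zero (hq0 : 0 < q) (hq1 : q < 1) (hx : 0 < x) : qGamma q x ≠ 0 :=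
  div_ne_zero (mul_ne_zero (qPochInf_ne_zero hq0 hq1 hq1)
    (Real.rpow_pos_of_pos (sub_pos.2 hq1) _).ne')
    (qPochInf_ne_zero hq0 hq1 (Real.rpow_lt_one hq0.le hq1 hx))

theorem qGamma_add_one (hq0 : 0 < q) (hq1 : q < 1) (hx : 0 < x) :
    qGamma q (x + 1) = (1 - q ^ x) / (1 - q) * qGamma q x := by
  have hqx : 1 - q ^ x ≠ 0 := (sub_pos.2 (Real.rpow_lt_one hq0.le hq1 hx)).ne'
  have hq : 1 - q ≠ 0 := (sub_pos.2 hq1).ne'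
  have hpoch : qPochInf (q ^ x) q = (1 - q ^ x) * qPochInf (q ^ (x + 1)) q := by
    rw [qPochInf_eq_mul (abs_lt.2 ⟨by linarith, hq1⟩), Real.rpow_add_one hq0.ne']
  have hpow : (1 - q) ^ (1 - x) = (1 - q) ^ (1 - (x + 1)) * (1 - q) := by
    rw [← Real.rpow_add_one hq, sub_add_eq_sub_sub, sub_add_cancel]
  have hpoch_ne : qPochInf (q ^ (x + 1)) q ≠ 0 :=
    qPochInf_ne_zero hq0 hq1 (Real.rpow_lt_one hq0.le hq1 (by linarith))
  rw [qGamma, qGamma, hpoch, hpow]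
  field_simp

end QGamma

section QMittagLeffler

open PowerSeries Filter Topology
open scoped PowerSeries

/-- The power series `F` with `λ_{γ,σ}(z;q) = F(z²)` and `h_{γ,σ}(z;q) = z Γ_q(γ+1) F(z)`. -/
noncomputable def lambdaSeries (γ σ q : ℝ) : ℝ⟦X⟧ :=
  mk fun n ↦ (-1) ^ n * σ ^ (2 * n) * q ^ (n * (n - 1)) / qGamma q (2 * n + γ + 1)

/-- The quotient of successive coefficients of `lambdaSeries γ σ q`, up to the factor
`-σ² (1 - q)²`, where `b` stands for `q ^ (γ + 1)`. -/
noncomputable def lambdaRatio (b q : ℝ) (n : ℕ) : ℝ :=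
  q ^ (2 * n) / ((1 - b * q ^ (2 * n)) * (1 - b * q ^ (2 * n + 1)))

variable {γ σ q b : ℝ}

theorem one_sub_mul_pow_pos (hq0 : 0 < q) (hq1 : q < 1) (hb : b < 1) (n : ℕ) :
    0 < 1 - b * q ^ n := by
  have := mul_pos (sub_pos.2 hb) (pow_pos hq0 n)
  have := pow_le_one₀ (n := n) hq0.le hq1.le
  linarith

theorem lambdaRatio_pos (hq0 : 0 < q) (hq1 : q < 1) (hb : b < 1) (n : ℕ) :
    0 < lambdaRatio b q n :=
  div_pos (pow_pos hq0 _) (mul_pos (one_sub_mul_pow_pos hq0 hq1 hb _)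
    (one_sub_mul_pow_pos hq0 hq1 hb _))

theorem four_mul_lambdaRatio_succ_lt (hq0 : 0 < q) (hq : q ≤ 1 / 2) (hb0 : 0 < b) (hb1 : b < 1)
    (n : ℕ) : 4 * lambdaRatio b q (n + 1) < lambdaRatio b q n := by
  have hq1 : q < 1 := by linarith
  have hpos := one_sub_mul_pow_pos hq0 hq1 hb1
  have hmono {m k : ℕ} (hmk : m < k) : 1 - b * q ^ m < 1 - b * q ^ k :=
    sub_lt_sub_left (mul_lt_mul_of_pos_left (pow_lt_pow_right_of_lt_one₀ hq0 hq1 hmk) hb0) 1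
  have hnum : 4 * q ^ (2 * (n + 1)) ≤ q ^ (2 * n) := by
    have hsq : q ^ 2 ≤ (1 / 2) ^ 2 := pow_le_pow_left₀ hq0.le hq 2
    rw [mul_add, mul_one, pow_add]
    nlinarith [pow_pos hq0 (2 * n)]
  rw [lambdaRatio, lambdaRatio, ← mul_div_assoc]
  exact div_lt_div₀' hnum
    (mul_lt_mul'' (hmono (by lia)) (hmono (by lia)) (hpos _).le (hpos _).le)
    (pow_pos hq0 _) (mul_pos (hpos _) (hpos _))

theorem tendsto_lambdaRatio (hq0 : 0 ≤ q) (hq1 : q < 1) (b : ℝ) :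
    Tendsto (lambdaRatio b q) atTop (𝓝 0) := by
  have hpow := tendsto_pow_atTop_nhds_zero_of_lt_one hq0 hq1
  have heven : Tendsto (fun n : ℕ ↦ q ^ (2 * n)) atTop (𝓝 0) :=
    hpow.comp (tendsto_id.const_mul_atTop' two_pos)
  have hodd : Tendsto (fun n : ℕ ↦ q ^ (2 * n + 1)) atTop (𝓝 0) := by
    simpa [pow_succ] using heven.mul_const q
  have hlim :=
    heven.div (((heven.const_mul b).const_sub 1).mul ((hodd.const_mul b).const_sub 1)) (by simp)
  rw [zero_div] at hlim
  exact hlim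

theorem coeff_lambdaSeries_ne_zero (hq0 : 0 < q) (hq1 : q < 1) (hσ : σ ≠ 0) (hγ : -1 < γ) (n : ℕ) :
    coeff n (lambdaSeries γ σ q) ≠ 0 := by
  rw [lambdaSeries, coeff_mk]
  exact div_ne_zero (by have := hq0.ne'; positivity)
    (qGamma_ne_zero hq0 hq1 (by linarith [n.cast_nonneg (α := ℝ)]))

theorem coeff_succ_lambdaSeries (hq0 : 0 < q) (hq1 : q < 1) (hγ : -1 < γ) (n : ℕ) :
    coeff (n + 1) (lambdaSeries γ σ q) =
      coeff n (lambdaSeries γ σ q) * (σ ^ 2 * (1 - q) ^ 2 * -lambdaRatio (q ^ (γ + 1)) q n) := by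
  have hx : 0 < 2 * n + γ + 1 := by linarith [n.cast_nonneg (α := ℝ)]
  have hb : q ^ (γ + 1) < 1 := Real.rpow_lt_one hq0.le hq1 (by linarith)
  have hrpow (m : ℕ) : q ^ (γ + 1) * q ^ m = q ^ (m + γ + 1) := by
    rw [← Real.rpow_natCast q m, ← Real.rpow_add hq0]
    ring_nf
  have hpow : q ^ ((n + 1) * (n + 1 - 1)) = q ^ (n * (n - 1)) * q ^ (2 * n) := by
    rw [← pow_add]
    cases n <;> simp; ring
  have hΓ : qGamma q (2 * (n + 1 : ℕ) + γ + 1) = (1 - q ^ (γ + 1) * q ^ (2 * n + 1)) / (1 - q) *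
      ((1 - q ^ (γ + 1) * q ^ (2 * n)) / (1 - q) * qGamma q (2 * n + γ + 1)) := by
    rw [show (2 * (n + 1 : ℕ) + γ + 1 : ℝ) = 2 * n + γ + 1 + 1 + 1 by push_cast; ring,
      qGamma_add_one hq0 hq1 (by linarith), qGamma_add_one hq0 hq1 hx, hrpow, hrpow]
    push_cast
    ring_nf
  have h1q : 1 - q ≠ 0 := (sub_pos.2 hq1).ne'
  have hne (m : ℕ) : 1 - q ^ (γ + 1) * q ^ m ≠ 0 := (one_sub_mul_pow_pos hq0 hq1 hb m).ne'
  have := hne (2 * n)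
  have := hne (2 * n + 1)
  have := qGamma_ne_zero hq0 hq1 hx
  rw [lambdaSeries, coeff_mk, coeff_mk, lambdaRatio, hpow, hΓ]
  field_simp
  ring

theorem lambdaSeries_eq_C_mul_rescale (hq0 : 0 < q) (hq1 : q < 1) (hγ : -1 < γ) :
    lambdaSeries γ σ q = C (coeff 0 (lambdaSeries γ σ q)) * rescale (σ ^ 2 * (1 - q) ^ 2)
      (mk fun n ↦ ∏ k ∈ Finset.range n, -lambdaRatio (q ^ (γ + 1)) q k) := by
  ext n
  rw [coeff_C_mul, coeff_rescale, coeff_mk]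
  induction n with
  | zero => simp
  | succ n ih =>
    rw [coeff_succ_lambdaSeries hq0 hq1 hγ, ih, Finset.prod_range_succ]
    ring

theorem isEntire_lambdaSeries (hq0 : 0 < q) (hq1 : q < 1) (hγ : -1 < γ) :
    IsEntire (lambdaSeries γ σ q) := by
  rw [lambdaSeries_eq_C_mul_rescale hq0 hq1 hγ]
  exact ((isEntire_mk_prod (by simpa using (tendsto_lambdaRatio hq0.le hq1 _).neg)).rescale
    _).C_mul _

theorem logDerivNonpos_lambdaSeries (hq0 : 0 < q) (hq1 : q < 1) (hγ : -1 < γ)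
    (h : γ = 0 ∨ γ = 1 ∨ q ≤ 1 / 2) : LogDerivNonpos (lambdaSeries γ σ q) := by
  have hq2 : q ^ 2 < 1 := pow_lt_one₀ hq0.le hq1 two_ne_zero
  have hq3 : q ^ 3 < 1 := pow_lt_one₀ hq0.le hq1 three_ne_zero
  rw [lambdaSeries_eq_C_mul_rescale hq0 hq1 hγ]
  refine (LogDerivNonpos.rescale ?_ (by positivity)).C_mul _
  rcases h with rfl | rfl | hq
  · convert LogDerivNonpos.mk_prod_div (p := q ^ 2) (b := q) (by positivity) hq2 hq0.le hq1
      using 5 with n k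
    rw [lambdaRatio, zero_add, Real.rpow_one]
    ring_nf
  · convert LogDerivNonpos.mk_prod_div (p := q ^ 2) (b := q ^ 3) (by positivity) hq2
      (by positivity) hq3 using 5 with n k
    rw [lambdaRatio, one_add_one_eq_two, Real.rpow_two]
    ring_nf
  · have hb0 : 0 < q ^ (γ + 1) := Real.rpow_pos_of_pos hq0 _
    have hb1 : q ^ (γ + 1) < 1 := Real.rpow_lt_one hq0.le hq1 (by linarith)
    exact LogDerivNonpos.mk_prod_neg (lambdaRatio_pos hq0 hq1 hb1)
      (four_mul_lambdaRatio_succ_lt hq0 hq hb0 hb1)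

theorem condR.eq_zero_or_eq_one_or_le_half (hq0 : 0 < q) (hq1 : q < 1) (h : condR q γ) :
    γ = 0 ∨ γ = 1 ∨ q ≤ 1 / 2 := by
  rcases h with (hγ | hγ) | ⟨⟨hγ, -⟩, -, hlt⟩
  · exact .inl hγ
  · exact .inr (.inl hγ)
  have hfactor {x : ℝ} (hx : 0 < x) : 0 ≤ 1 - q ^ x ∧ 1 - q ^ x ≤ 1 :=
    ⟨sub_nonneg.2 (Real.rpow_lt_one hq0.le hq1 hx).le, sub_le_self _ (Real.rpow_nonneg hq0.le x)⟩
  obtain ⟨hu0, hu1⟩ := hfactor (by linarith : 0 < γ + 1)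
  obtain ⟨hv0, hv1⟩ := hfactor (by linarith : 0 < γ + 2)
  rw [mul_assoc, mul_assoc, inv_mul_eq_div, lt_div_iff₀ hq0, one_mul] at hlt
  have hle : (1 - q) * ((1 - q ^ (γ + 1)) * (1 - q ^ (γ + 2))) ≤ 1 - q :=
    mul_le_of_le_one_right (sub_nonneg.2 hq1.le) (mul_le_one₀ hu1 hv0 hv1)
  exact .inr (.inr (by linarith))

theorem qMLR_eq_seriesSum (γ σ q : ℝ) :
    qMLR γ σ q = fun x ↦ seriesSum (lambdaSeries γ σ q) (x ^ 2) := by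
  ext x
  simp only [qMLR, seriesSum, lambdaSeries, coeff_mk, pow_mul x]

theorem hML_eq_seriesSum (γ σ q : ℝ) :
    hML γ σ q = fun z ↦ z * (qGamma q (γ + 1) : ℂ) *
      seriesSum ((lambdaSeries γ σ q).map Complex.ofRealHom) z := by
  ext z
  simp only [hML, seriesSum, lambdaSeries, coeff_map, coeff_mk, Complex.ofRealHom_eq_coe]

theorem sqrt_mul_deriv_qMLR_sub_eq (hF : IsEntire (lambdaSeries γ σ q)) (α : ℝ) {r : ℝ}
    (hr : 0 ≤ r) :
    √r * deriv (qMLR γ σ q) √r - 2 * (α - 1) * qMLR γ σ q √r =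
      2 * (r * seriesSum (d⁄dX ℝ (lambdaSeries γ σ q)) r -
        (α - 1) * seriesSum (lambdaSeries γ σ q) r) := by
  have hderiv : HasDerivAt (qMLR γ σ q)
      (seriesSum (d⁄dX ℝ (lambdaSeries γ σ q)) r * (2 * √r)) √r := by
    rw [qMLR_eq_seriesSum]
    have hsq : HasDerivAt (fun x : ℝ ↦ x ^ 2) (2 * √r) √r := by simpa using hasDerivAt_pow 2 √r
    simpa only [Real.sq_sqrt hr, Function.comp_def] using (hF.hasDerivAt_real (√r ^ 2)).comp √r hsq
  rw [hderiv.deriv]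
  simp only [qMLR_eq_seriesSum, Real.sq_sqrt hr]
  linear_combination
    2 * seriesSum (d⁄dX ℝ (lambdaSeries γ σ q)) r * Real.mul_self_sqrt hr

end QMittagLeffler

theorem stmt8_general {q σ γ α : ℝ} (hq0 : 0 < q) (hq1 : q < 1) (hσ : σ ≠ 0) (hγ : -1 < γ)
    (h : γ = 0 ∨ γ = 1 ∨ q ≤ 1 / 2) (hα : α < 1) :
    ∃ z1 : ℝ,
      IsLeast {r : ℝ | 0 < r ∧
        Real.sqrt r * deriv (qMLR γ σ q) (Real.sqrt r) -
          2 * (α - 1) * qMLR γ σ q (Real.sqrt r) = 0} z1 ∧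
      radiusStarlike α (hML γ σ q) = z1 := by
  have hF : IsEntire (lambdaSeries γ σ q) := isEntire_lambdaSeries hq0 hq1 hγ
  have hΓ : (qGamma q (γ + 1) : ℂ) ≠ 0 :=
    Complex.ofReal_ne_zero.2 (qGamma_ne_zero hq0 hq1 (by linarith))
  have hcoeff := coeff_lambdaSeries_ne_zero hq0 hq1 hσ hγ
  obtain ⟨ρ, hρ, hradius⟩ := (logDerivNonpos_lambdaSeries hq0 hq1 hγ h
    ).exists_isLeast_radiusStarlike hF (hcoeff 0) (hcoeff 1) hα hΓ
  refine ⟨ρ, ?_, hML_eq_seriesSum γ σ q ▸ hradius⟩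
  convert hρ using 2
  ext r
  refine and_congr_right fun hr ↦ ?_
  rw [sqrt_mul_deriv_qMLR_sub_eq hF α hr.le, mul_eq_zero_iff_left two_ne_zero, sub_eq_zero]

theorem stmt8 (q σ γ : ℝ) (hq0 : 0 < q) (hq1 : q < 1) (hσ : 0 < σ)
    (hγ0 : 0 ≤ γ) (hγ2 : γ < 2) (hR : condR q γ)
    (α : ℝ) (hα0 : 0 ≤ α) (hα1 : α < 1) :
    ∃ z1 : ℝ,
      IsLeast {r : ℝ | 0 < r ∧
        Real.sqrt r * deriv (qMLR γ σ q) (Real.sqrt r) -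
          2 * (α - 1) * qMLR γ σ q (Real.sqrt r) = 0} z1 ∧
      radiusStarlike α (hML γ σ q) = z1 :=
  stmt8_general hq0 hq1 hσ.ne' (by linarith) (hR.eq_zero_or_eq_one_or_le_half hq0 hq1) hα1
end

section
/- Assume condition (R). Then the radius of starlikeness r*(g_{γ,σ}(·;q)) = r*_0(g_{γ,σ}(·;q)) satisfies Γ_q(γ+3)/(3σ²Γ_q(γ+1)) < (r*(g_{γ,σ}(·;q)))² < 3Γ_q(γ+3)Γ_q(γ+5) / ( σ²(9Γ_q(γ+1)Γ_q(γ+5) − 10q²Γ_q(γ+3)²) ). -/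
/-! Write the function as `z * F (z ^ 2)` with `F w = ∑ (-1) ^ n * a n * w ^ n`, where `a 0 = 1`
and `a n > 0`. Then `z * f' z / f z = G w / F w` with `w = z ^ 2` and
`G w = ∑ (-1) ^ n * (2 * n + 1) * a n * w ^ n`. The functional equation of the `q`-gamma function
gives `a (n + 1) ≤ 2 / 5 * a 1 * a n` for `n ≥ 1`, so both series are dominated by their quadratic
parts in the variable `t = a 1 * w`, with the single parameter `c = a 2 / a 1 ^ 2 ≤ 2 / 5`:
`F ≈ 1 - t + c * t ^ 2` and `G ≈ 1 - 3 * t + 5 * c * t ^ 2`.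

* The inequality `0 < Re (G / F)` amounts to `‖G - F‖ < ‖G + F‖`, which for the quadratic parts
  holds on a disc slightly larger than `‖t‖ ≤ 1 / 3`, with a margin proportional to `c` that absorbs
  the tails.
* On the positive axis `G ≤ 1 - 3 * t + 5 * c * t ^ 2` and `F ≥ 1 - t` because the series alternate,
  and `1 - 3 * t + 5 * c * t ^ 2` is negative at `t = 3 / (9 - 10 * c)`.
-/

open Complex

/-- The alternating power series `∑ (-1) ^ n * d n * w ^ n`. -/
noncomputable def altSeries (d : ℕ → ℝ) (w : ℂ) : ℂ :=
  ∑' n : ℕ, (((-1) ^ n * d n : ℝ) : ℂ) * w ^ n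

/-- The coefficients of the derivative of an odd function: if `d` are the coefficients of
`z * altSeries d (z ^ 2)`, then `oddWeight d` are those of its derivative. -/
def oddWeight (d : ℕ → ℝ) (n : ℕ) : ℝ := (2 * n + 1) * d n

lemma norm_altSeries_term (d : ℕ → ℝ) (w : ℂ) (n : ℕ) :
    ‖(((-1) ^ n * d n : ℝ) : ℂ) * w ^ n‖ = |d n| * ‖w‖ ^ n := by
  simp

lemma altSeries_ofReal (d : ℕ → ℝ) (x : ℝ) :
    altSeries d x = ((∑' n : ℕ, (-1) ^ n * (d n * x ^ n) : ℝ) : ℂ) := by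
  simp only [altSeries, ofReal_tsum]
  exact tsum_congr fun n => by push_cast; ring

lemma norm_altSeries_sub_sum_le {d e : ℕ → ℝ} {w : ℂ} (hde : ∀ n, |d n| ≤ e n)
    (he : Summable fun n => e n * ‖w‖ ^ n) (k : ℕ) :
    ‖altSeries d w - ∑ i ∈ Finset.range k, (((-1) ^ i * d i : ℝ) : ℂ) * w ^ i‖ ≤
      ∑' n, e (n + k) * ‖w‖ ^ (n + k) := by
  have hterm (n : ℕ) : ‖(((-1) ^ n * d n : ℝ) : ℂ) * w ^ n‖ ≤ e n * ‖w‖ ^ n := by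
    rw [norm_altSeries_term]
    exact mul_le_mul_of_nonneg_right (hde n) (by positivity)
  rw [altSeries, ← (he.of_norm_bounded hterm).sum_add_tsum_nat_add k, add_sub_cancel_left]
  exact tsum_of_norm_bounded ((summable_nat_add_iff k).2 he).hasSum fun n => hterm (n + k)

lemma deriv_mul_altSeries_sq {d : ℕ → ℝ} {r : ℝ} (hd : Summable fun n => |d n| * r ^ n) {z : ℂ}
    (hz : ‖z‖ ^ 2 < r) :
    deriv (fun z => z * altSeries d (z ^ 2)) z = altSeries (oddWeight d) (z ^ 2) := by
  have hr : 0 ≤ r := (sq_nonneg _).trans hz.le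
  have hbound (n : ℕ) (w : ℂ) (hw : w ∈ Metric.ball (0 : ℂ) √r) :
      ‖(((-1) ^ n * d n : ℝ) : ℂ) * w ^ (2 * n + 1)‖ ≤ |d n| * r ^ n * √r := by
    rw [mem_ball_zero_iff] at hw
    rw [pow_succ, pow_mul, ← mul_assoc, norm_mul, norm_altSeries_term, norm_pow]
    have hw2 : ‖w‖ ^ 2 ≤ r := (Real.le_sqrt (norm_nonneg _) hr).1 hw.le
    gcongr
  have hsum := hasSum_deriv_of_summable_norm (hd.mul_right √r) (fun n => by fun_prop)
    Metric.isOpen_ball hbound (mem_ball_zero_iff.2 ((Real.lt_sqrt (norm_nonneg z)).2 hz))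
  have hfun : (fun z => z * altSeries d (z ^ 2)) =
      fun z => ∑' n, (((-1) ^ n * d n : ℝ) : ℂ) * z ^ (2 * n + 1) := by
    funext z
    rw [altSeries, ← tsum_mul_left]
    exact tsum_congr fun n => by ring
  rw [hfun, ← hsum.tsum_eq, altSeries]
  refine tsum_congr fun n => ?_
  rw [deriv_const_mul_field, deriv_pow_field, oddWeight]
  push_cast
  ring

lemma alternating_tsum_mem_Icc {e : ℕ → ℝ} (he : Summable e)
    (hanti : ∀ n, 1 ≤ n → e (n + 1) ≤ e n) :
    ∑' n : ℕ, (-1) ^ n * e n ∈ Set.Icc (e 0 - e 1) (e 0 - e 1 + e 2) := by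
  have htail : Antitone fun n => e (n + 1) :=
    antitone_nat_of_succ_le fun n => hanti (n + 1) (by omega)
  have hlim := ((summable_nat_add_iff 1).2 he).alternating.hasSum.tendsto_sum_nat
  have hlower := htail.alternating_series_le_tendsto hlim 1
  have hupper := htail.tendsto_le_alternating_series hlim 0
  have hsplit : ∑' n : ℕ, (-1) ^ n * e n = e 0 - ∑' n : ℕ, (-1) ^ n * e (n + 1) := by
    rw [he.alternating.tsum_eq_zero_add, sub_eq_add_neg, ← tsum_neg]
    congr 1
    · simp
    · exact tsum_congr fun n => by ring
  norm_num [Finset.sum_range_succ] at hlower hupper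
  rw [hsplit]
  constructor <;> linarith

lemma re_div_pos_of_norm_sub_lt_norm_add {u v : ℂ} (h : ‖u - v‖ < ‖u + v‖) : 0 < (u / v).re := by
  have hv : v ≠ 0 := by
    rintro rfl
    simp at h
  have hsq : normSq (u - v) < normSq (u + v) := by
    simpa only [normSq_eq_norm_sq] using pow_lt_pow_left₀ h (norm_nonneg _) two_ne_zero
  rw [normSq_sub, normSq_add] at hsq
  have hre : (u / v).re = (u * (starRingEnd ℂ) v).re / normSq v := by
    rw [div_re, mul_re, conj_re, conj_im]
    ring
  rw [hre]
  exact div_pos (by linarith) (normSq_pos.2 hv)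

lemma re_div_pos_of_norm_sub_le {u v u₀ v₀ : ℂ} {ε : ℝ} (hu : ‖u - u₀‖ ≤ ε) (hv : ‖v - v₀‖ ≤ ε)
    (h : ‖u₀ - v₀‖ + 4 * ε < ‖u₀ + v₀‖) : 0 < (u / v).re := by
  refine re_div_pos_of_norm_sub_lt_norm_add ?_
  have hsub : ‖u - v‖ ≤ ‖u - u₀‖ + ‖u₀ - v₀‖ + ‖v - v₀‖ := by
    have := norm_sub_le ((u - u₀) + (u₀ - v₀)) (v - v₀)
    rw [show (u - u₀) + (u₀ - v₀) - (v - v₀) = u - v by ring] at this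
    linarith [norm_add_le (u - u₀) (u₀ - v₀)]
  have hadd : ‖u₀ + v₀‖ ≤ ‖u + v‖ + ‖u - u₀‖ + ‖v - v₀‖ := by
    have := norm_sub_le ((u + v) - (u - u₀)) (v - v₀)
    rw [show (u + v) - (u - u₀) - (v - v₀) = u₀ + v₀ by ring] at this
    linarith [norm_sub_le (u + v) (u - u₀)]
  linarith

section RadiusStarlike

variable {α : ℝ} {f : ℂ → ℂ} {z₀ : ℂ}

lemma le_norm_of_starlike {r : ℝ} (hz₀ : z₀ ≠ 0) (h : (z₀ * deriv f z₀ / f z₀).re ≤ α)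
    (hr : ∀ z : ℂ, 0 < ‖z‖ → ‖z‖ < r → α < (z * deriv f z / f z).re) : r ≤ ‖z₀‖ :=
  le_of_not_gt fun hlt => (hr z₀ (norm_pos_iff.2 hz₀) hlt).not_ge h

lemma radiusStarlike_le_norm (hz₀ : z₀ ≠ 0) (h : (z₀ * deriv f z₀ / f z₀).re ≤ α) :
    radiusStarlike α f ≤ ‖z₀‖ :=
  Real.sSup_le (fun _ hr => le_norm_of_starlike hz₀ h hr.2) (norm_nonneg _)

lemma le_radiusStarlike {r : ℝ} (hz₀ : z₀ ≠ 0) (h : (z₀ * deriv f z₀ / f z₀).re ≤ α) (hr₀ : 0 < r)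
    (hr : ∀ z : ℂ, 0 < ‖z‖ → ‖z‖ < r → α < (z * deriv f z / f z).re) : r ≤ radiusStarlike α f :=
  le_csSup ⟨‖z₀‖, fun _ hs => le_norm_of_starlike hz₀ h hs.2⟩ ⟨hr₀, hr⟩

end RadiusStarlike

/-- The algebra behind the lower bound: `t * (1 - 2 * c * t)` and `1 - 2 * t + 3 * c * t ^ 2` are
the halves of `F - G` and `F + G` for the quadratic parts of `F` and `G`. -/
lemma norm_linear_add_le_norm_quadratic {c : ℝ} (hc₀ : 0 ≤ c) (hc : c ≤ 2 / 5) {t : ℂ}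
    (ht : 3 * ‖t‖ ≤ 1 + c / 40) :
    ‖t * (1 - 2 * c * t)‖ + c / 3 ≤ ‖1 - 2 * t + 3 * c * t ^ 2‖ := by
  have hs₀ := norm_nonneg t
  have hdecomp : (1 - 2 * c * t) * (1 - (2 - 2 * c) * t) =
      (1 - 2 * t + 3 * c * t ^ 2) + c * (1 - 4 * c) * t ^ 2 := by ring
  have hlin : 1 - 2 * c * ‖t‖ ≤ ‖1 - 2 * c * t‖ := by
    have := norm_sub_norm_le 1 (2 * c * t : ℂ)
    simpa [abs_of_nonneg hc₀] using this
  have hfactor : 1 - (2 - 2 * c) * ‖t‖ ≤ ‖1 - (2 - 2 * c) * t‖ := by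
    have := norm_sub_norm_le 1 (((2 - 2 * c : ℝ) : ℂ) * t)
    rw [norm_mul, norm_real, Real.norm_of_nonneg (by linarith)] at this
    simpa using this
  have hrem : ‖c * (1 - 4 * c) * t ^ 2‖ ≤ c * ‖t‖ ^ 2 := by
    have : |1 - 4 * c| ≤ 1 := abs_le.2 ⟨by linarith, by linarith⟩
    have hnorm : ‖(c * (1 - 4 * c) * t ^ 2 : ℂ)‖ = c * |1 - 4 * c| * ‖t‖ ^ 2 := by
      have hcast : (c * (1 - 4 * c) * t ^ 2 : ℂ) = ((c * (1 - 4 * c) : ℝ) : ℂ) * t ^ 2 := by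
        push_cast
        rfl
      rw [hcast, norm_mul, norm_real, norm_pow, Real.norm_eq_abs, abs_mul, abs_of_nonneg hc₀]
    rw [hnorm]
    nlinarith [mul_le_mul_of_nonneg_left this (mul_nonneg hc₀ (sq_nonneg ‖t‖))]
  have hprod : ‖1 - 2 * c * t‖ * ‖1 - (2 - 2 * c) * t‖ ≤
      ‖1 - 2 * t + 3 * c * t ^ 2‖ + ‖c * (1 - 4 * c) * t ^ 2‖ := by
    rw [← norm_mul, hdecomp]
    exact norm_add_le _ _
  rw [norm_mul]
  have hm : 73 / 100 ≤ ‖1 - 2 * c * t‖ := by nlinarith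
  have hgap : 16 / 25 * c ≤ ‖1 - (2 - 2 * c) * t‖ - ‖t‖ := by nlinarith
  have hgain : 73 / 100 * (16 / 25 * c) ≤ ‖1 - 2 * c * t‖ * (‖1 - (2 - 2 * c) * t‖ - ‖t‖) := by
    gcongr
  have hsq : ‖t‖ ^ 2 ≤ 57 / 500 := by nlinarith
  nlinarith [mul_le_mul_of_nonneg_left hsq hc₀]

/-- Positive coefficient sequences `a 0 = 1, a 1, a 2, …` in which every quotient of consecutive
terms after the first one is at most `2 / 5` of the first quotient. This is invariant under the
rescaling `a n ↦ k ^ n * a n` that corresponds to rescaling the variable. -/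
structure RapidDecay (a : ℕ → ℝ) : Prop where
  zero : a 0 = 1
  pos : ∀ n, 0 < a n
  succ_le : ∀ n, 1 ≤ n → a (n + 1) ≤ 2 / 5 * a 1 * a n

namespace RapidDecay

variable {a : ℕ → ℝ}

lemma two_le (h : RapidDecay a) : a 2 ≤ 2 / 5 * a 1 ^ 2 := by
  linarith [h.succ_le 1 le_rfl]

lemma oddWeight_pos (h : RapidDecay a) (n : ℕ) : 0 < oddWeight a n :=
  mul_pos (by positivity) (h.pos n)

lemma abs_oddWeight (h : RapidDecay a) (n : ℕ) : |oddWeight a n| = oddWeight a n :=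
  abs_of_pos (h.oddWeight_pos n)

lemma abs_le_oddWeight (h : RapidDecay a) (n : ℕ) : |a n| ≤ oddWeight a n := by
  rw [abs_of_pos (h.pos n), oddWeight]
  exact le_mul_of_one_le_left (h.pos n).le (by linarith [n.cast_nonneg (α := ℝ)])

lemma mul_pow_succ_le (h : RapidDecay a) {r : ℝ} (hr : 0 ≤ r) {n : ℕ} (hn : 1 ≤ n) :
    a (n + 1) * r ^ (n + 1) ≤ 2 / 5 * (a 1 * r) * (a n * r ^ n) := by
  calc a (n + 1) * r ^ (n + 1) ≤ 2 / 5 * a 1 * a n * r ^ (n + 1) := by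
        gcongr
        exact h.succ_le n hn
    _ = 2 / 5 * (a 1 * r) * (a n * r ^ n) := by ring

lemma oddWeight_mul_pow_succ_le (h : RapidDecay a) {r : ℝ} (hr : 0 ≤ r) {n : ℕ} (hn : 1 ≤ n) :
    oddWeight a (n + 1) * r ^ (n + 1) ≤ 2 / 3 * (a 1 * r) * (oddWeight a n * r ^ n) := by
  have := h.pos 1
  have := h.pos n
  have hn' : (1 : ℝ) ≤ n := by exact_mod_cast hn
  have hweight : 2 * ((n + 1 : ℕ) : ℝ) + 1 ≤ 5 / 3 * (2 * n + 1) := by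
    push_cast
    linarith
  calc oddWeight a (n + 1) * r ^ (n + 1)
      = (2 * ((n + 1 : ℕ) : ℝ) + 1) * (a (n + 1) * r ^ (n + 1)) := mul_assoc _ _ _
    _ ≤ 5 / 3 * (2 * n + 1) * (2 / 5 * (a 1 * r) * (a n * r ^ n)) := by
        exact mul_le_mul hweight (h.mul_pow_succ_le hr hn)
          (mul_nonneg (h.pos _).le (by positivity)) (by positivity)
    _ = 2 / 3 * (a 1 * r) * (oddWeight a n * r ^ n) := by
        rw [oddWeight]
        ring

lemma summable_oddWeight (h : RapidDecay a) {r : ℝ} (hr : 0 ≤ r) (har : a 1 * r ≤ 1) :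
    Summable fun n => oddWeight a n * r ^ n := by
  refine summable_of_ratio_norm_eventually_le (r := 2 / 3) (by norm_num) ?_
  filter_upwards [Filter.eventually_ge_atTop 1] with n hn
  have hterm (m : ℕ) : 0 ≤ oddWeight a m * r ^ m :=
    mul_nonneg (h.oddWeight_pos m).le (by positivity)
  rw [Real.norm_of_nonneg (hterm _), Real.norm_of_nonneg (hterm _)]
  refine (h.oddWeight_mul_pow_succ_le hr hn).trans ?_
  exact mul_le_mul_of_nonneg_right (by linarith) (hterm n)

lemma summable_abs (h : RapidDecay a) {r : ℝ} (hr : 0 ≤ r) (har : a 1 * r ≤ 1) :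
    Summable fun n => |a n| * r ^ n :=
  (h.summable_oddWeight hr har).of_nonneg_of_le (fun n => by positivity)
    fun n => mul_le_mul_of_nonneg_right (h.abs_le_oddWeight n) (by positivity)

lemma tsum_oddWeight_tail_le (h : RapidDecay a) {r : ℝ} (hr : 0 ≤ r) (har : a 1 * r ≤ 17 / 50) :
    ∑' n, oddWeight a (n + 3) * r ^ (n + 3) ≤ 5 / 4 * (a 2 * r ^ 2) := by
  have ha₂ := h.pos 2
  have hterm (n : ℕ) : 0 ≤ oddWeight a n * r ^ n :=
    mul_nonneg (h.oddWeight_pos n).le (by positivity)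
  have hgeom (n : ℕ) : oddWeight a (n + 3) * r ^ (n + 3) ≤
      (17 / 75) ^ n * (oddWeight a 3 * r ^ 3) := by
    refine le_geom (u := fun n => oddWeight a (n + 3) * r ^ (n + 3)) (by norm_num) n fun k _ => ?_
    refine (h.oddWeight_mul_pow_succ_le hr (n := k + 3) (by omega)).trans ?_
    exact mul_le_mul_of_nonneg_right (by linarith) (hterm _)
  have hfirst : oddWeight a 3 * r ^ 3 ≤ 119 / 125 * (a 2 * r ^ 2) := by
    have hcube := h.mul_pow_succ_le hr (n := 2) (by norm_num)
    have hscale := mul_le_mul_of_nonneg_right har (mul_nonneg ha₂.le (sq_nonneg r))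
    norm_num [oddWeight] at hcube ⊢
    linarith
  calc ∑' n, oddWeight a (n + 3) * r ^ (n + 3)
      ≤ ∑' n : ℕ, (17 / 75) ^ n * (oddWeight a 3 * r ^ 3) :=
        ((summable_nat_add_iff 3).2 (h.summable_oddWeight hr (by linarith))).tsum_le_tsum hgeom
          ((summable_geometric_of_lt_one (by norm_num) (by norm_num)).mul_right _)
    _ = 75 / 58 * (oddWeight a 3 * r ^ 3) := by
        rw [tsum_mul_right, tsum_geometric_of_lt_one (by norm_num) (by norm_num)]
        norm_num
    _ ≤ 5 / 4 * (a 2 * r ^ 2) := by nlinarith [mul_nonneg ha₂.le (sq_nonneg r)]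

lemma norm_altSeries_sub_quadratic_le (h : RapidDecay a) {d : ℕ → ℝ}
    (hd : ∀ n, |d n| ≤ oddWeight a n) {w : ℂ} (hw : a 1 * ‖w‖ ≤ 17 / 50) :
    ‖altSeries d w - (d 0 - d 1 * w + d 2 * w ^ 2)‖ ≤ 5 / 4 * (a 2 * ‖w‖ ^ 2) := by
  have hsum := h.summable_oddWeight (norm_nonneg w) (by linarith)
  have htail := norm_altSeries_sub_sum_le hd hsum 3
  have hquad : ∑ i ∈ Finset.range 3, (((-1) ^ i * d i : ℝ) : ℂ) * w ^ i =
      d 0 - d 1 * w + d 2 * w ^ 2 := by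
    simp [Finset.sum_range_succ, sub_eq_add_neg]
  rw [hquad] at htail
  exact htail.trans (h.tsum_oddWeight_tail_le (norm_nonneg w) hw)

lemma re_altSeries_oddWeight_div_pos (h : RapidDecay a) {w : ℂ}
    (hw : 3 * (a 1 * ‖w‖) ≤ 1 + a 2 / a 1 ^ 2 / 40) :
    0 < (altSeries (oddWeight a) w / altSeries a w).re := by
  have ha₁ := h.pos 1
  have ha₂ := h.pos 2
  set c := a 2 / a 1 ^ 2 with hc
  set t : ℂ := a 1 * w with ht
  have hc₀ : 0 < c := by positivity
  have hc₁ : c ≤ 2 / 5 := (div_le_iff₀ (by positivity)).2 h.two_le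
  have hnorm : ‖t‖ = a 1 * ‖w‖ := by rw [ht, norm_mul, norm_real, Real.norm_of_nonneg ha₁.le]
  have hsmall : a 1 * ‖w‖ ≤ 17 / 50 := by linarith
  have hrescale : a 2 = c * a 1 ^ 2 := by rw [hc, div_mul_cancel₀ _ (by positivity)]
  have hε : a 2 * ‖w‖ ^ 2 = c * ‖t‖ ^ 2 := by rw [hnorm, hrescale]; ring
  have hF := h.norm_altSeries_sub_quadratic_le h.abs_le_oddWeight hsmall
  have hG := h.norm_altSeries_sub_quadratic_le (fun n => (h.abs_oddWeight n).le) hsmall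
  refine re_div_pos_of_norm_sub_le hG hF ?_
  have hsub : (oddWeight a 0 - oddWeight a 1 * w + oddWeight a 2 * w ^ 2 : ℂ) -
      (a 0 - a 1 * w + a 2 * w ^ 2) = -2 * (t * (1 - 2 * c * t)) := by
    simp only [oddWeight, h.zero, hrescale, ht]
    push_cast
    ring
  have hadd : (oddWeight a 0 - oddWeight a 1 * w + oddWeight a 2 * w ^ 2 : ℂ) +
      (a 0 - a 1 * w + a 2 * w ^ 2) = 2 * (1 - 2 * t + 3 * c * t ^ 2) := by
    simp only [oddWeight, h.zero, hrescale, ht]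
    push_cast
    ring
  have hquad := norm_linear_add_le_norm_quadratic hc₀.le hc₁ (t := t) (by rwa [hnorm])
  have hsq : ‖t‖ ^ 2 ≤ 57 / 500 := by nlinarith [norm_nonneg t]
  rw [hsub, hadd, hε, norm_mul, norm_mul 2, norm_neg, Complex.norm_ofNat]
  nlinarith [mul_le_mul_of_nonneg_left hsq hc₀.le]

lemma one_sub_le_re_altSeries (h : RapidDecay a) {x : ℝ} (hx : 0 ≤ x) (hax : a 1 * x ≤ 1) :
    1 - a 1 * x ≤ (altSeries a x).re := by
  have hsum : Summable fun n => a n * x ^ n := by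
    simpa only [abs_of_pos (h.pos _)] using h.summable_abs hx hax
  have hanti (n : ℕ) (hn : 1 ≤ n) : a (n + 1) * x ^ (n + 1) ≤ a n * x ^ n :=
    (h.mul_pow_succ_le hx hn).trans <|
      mul_le_of_le_one_left (mul_nonneg (h.pos n).le (by positivity)) (by linarith)
  rw [altSeries_ofReal, ofReal_re]
  simpa [h.zero] using (alternating_tsum_mem_Icc hsum hanti).1

lemma re_altSeries_oddWeight_le (h : RapidDecay a) {x : ℝ} (hx : 0 ≤ x) (hax : a 1 * x ≤ 1) :
    (altSeries (oddWeight a) x).re ≤ 1 - 3 * a 1 * x + 5 * a 2 * x ^ 2 := by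
  have hanti (n : ℕ) (hn : 1 ≤ n) :
      oddWeight a (n + 1) * x ^ (n + 1) ≤ oddWeight a n * x ^ n :=
    (h.oddWeight_mul_pow_succ_le hx hn).trans <|
      mul_le_of_le_one_left (mul_nonneg (h.oddWeight_pos n).le (by positivity)) (by linarith)
  rw [altSeries_ofReal, ofReal_re]
  refine (alternating_tsum_mem_Icc (h.summable_oddWeight hx hax) hanti).2.trans_eq ?_
  simp only [oddWeight, h.zero]
  push_cast
  ring

lemma re_altSeries_oddWeight_div_nonpos (h : RapidDecay a) {x : ℝ} (hx : 0 ≤ x)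
    (hax : a 1 * x ≤ 1) (hquad : 1 - 3 * a 1 * x + 5 * a 2 * x ^ 2 ≤ 0) :
    (altSeries (oddWeight a) x / altSeries a x).re ≤ 0 := by
  have hF := h.one_sub_le_re_altSeries hx hax
  have hG := h.re_altSeries_oddWeight_le hx hax
  rw [altSeries_ofReal, ofReal_re] at hF hG
  rw [altSeries_ofReal, altSeries_ofReal, ← ofReal_div, ofReal_re]
  exact div_nonpos_of_nonpos_of_nonneg (by linarith) (by linarith)

lemma mul_deriv_div_eq (h : RapidDecay a) {z : ℂ} (hz : z ≠ 0) (haz : a 1 * ‖z‖ ^ 2 < 1) :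
    z * deriv (fun z => z * altSeries a (z ^ 2)) z / (z * altSeries a (z ^ 2)) =
      altSeries (oddWeight a) (z ^ 2) / altSeries a (z ^ 2) := by
  have ha₁ := h.pos 1
  have hsum := h.summable_abs (r := 1 / a 1) (by positivity) (mul_one_div_cancel ha₁.ne').le
  rw [deriv_mul_altSeries_sq hsum (by rwa [lt_div_iff₀ ha₁, mul_comm]), mul_div_mul_left _ _ hz]

lemma re_mul_deriv_div_sqrt_nonpos (h : RapidDecay a) {x : ℝ} (hx : 0 < x) (hax : a 1 * x < 1)
    (hquad : 1 - 3 * a 1 * x + 5 * a 2 * x ^ 2 ≤ 0) :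
    ((√x : ℂ) * deriv (fun z => z * altSeries a (z ^ 2)) √x /
      (√x * altSeries a ((√x : ℂ) ^ 2))).re ≤ 0 := by
  have hnorm : ‖(√x : ℂ)‖ ^ 2 = x := by
    rw [norm_real, Real.norm_of_nonneg (Real.sqrt_nonneg x), Real.sq_sqrt hx.le]
  rw [h.mul_deriv_div_eq (ofReal_ne_zero.2 (Real.sqrt_pos.2 hx).ne') (by rwa [hnorm]),
    ← ofReal_pow, Real.sq_sqrt hx.le]
  exact h.re_altSeries_oddWeight_div_nonpos hx.le hax.le hquad

lemma exists_lt_quadratic_nonpos (h : RapidDecay a) :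
    ∃ x, 0 < x ∧ a 1 * x < 1 ∧ 1 - 3 * a 1 * x + 5 * a 2 * x ^ 2 ≤ 0 ∧
      x < 3 * a 1 / (9 * a 1 ^ 2 - 10 * a 2) := by
  have ha₁ := h.pos 1
  have ha₂ := h.pos 2
  have hc := h.two_le
  have hden : 0 < 9 * a 1 ^ 2 - 10 * a 2 := by nlinarith
  set y := 3 * a 1 / (9 * a 1 ^ 2 - 10 * a 2) with hy
  have hy₀ : 0 < y := by positivity
  have hay : 3 * a 1 * y < 2 := by
    rw [hy, ← mul_div_assoc, div_lt_iff₀ hden]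
    nlinarith
  have hroot : 3 * a 1 * y * (3 * a 1 * y - 1) = 10 * a 2 * y ^ 2 := by
    have : y * (9 * a 1 ^ 2 - 10 * a 2) = 3 * a 1 := div_mul_cancel₀ _ hden.ne'
    linear_combination y * this
  have hay₁ : 1 < 3 * a 1 * y := by
    have : 0 < 3 * a 1 * y * (3 * a 1 * y - 1) := hroot ▸ by positivity
    exact sub_pos.1 (pos_of_mul_pos_right this (by positivity))
  have hneg : 1 - 3 * a 1 * y + 5 * a 2 * y ^ 2 < 0 := by
    calc 1 - 3 * a 1 * y + 5 * a 2 * y ^ 2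
        = (3 * a 1 * y - 1) * (3 * a 1 * y - 2) / 2 := by linear_combination -(1 / 2) * hroot
      _ < 0 := by nlinarith
  have hcont : ContinuousAt (fun x => 1 - 3 * a 1 * x + 5 * a 2 * x ^ 2) y := by fun_prop
  obtain ⟨x, hx, hx₀, hxy⟩ := (((hcont.eventually_lt_const hneg).filter_mono
    nhdsWithin_le_nhds).and (Ioo_mem_nhdsLT hy₀)).exists
  exact ⟨x, hx₀, by nlinarith, hx.le, hxy⟩

lemma sqrt_le_radiusStarlike (h : RapidDecay a) :
    √((1 + a 2 / a 1 ^ 2 / 40) / (3 * a 1)) ≤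
      radiusStarlike 0 fun z => z * altSeries a (z ^ 2) := by
  have ha₁ := h.pos 1
  have ha₂ := h.pos 2
  have hc : a 2 / a 1 ^ 2 ≤ 2 / 5 := (div_le_iff₀ (by positivity)).2 h.two_le
  obtain ⟨x, hx, hax, hquad, -⟩ := h.exists_lt_quadratic_nonpos
  refine le_radiusStarlike (ofReal_ne_zero.2 (Real.sqrt_pos.2 hx).ne')
    (h.re_mul_deriv_div_sqrt_nonpos hx hax hquad) (Real.sqrt_pos.2 (by positivity))
    fun z hz hzr => ?_
  have hz2 : 3 * (a 1 * ‖z ^ 2‖) < 1 + a 2 / a 1 ^ 2 / 40 := by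
    have := (Real.lt_sqrt hz.le).1 hzr
    rw [lt_div_iff₀ (by positivity)] at this
    rw [norm_pow]
    linarith
  rw [h.mul_deriv_div_eq (norm_pos_iff.1 hz) (by rw [← norm_pow]; linarith)]
  exact h.re_altSeries_oddWeight_div_pos hz2.le

theorem lt_radiusStarlike_sq (h : RapidDecay a) :
    1 / (3 * a 1) < radiusStarlike 0 (fun z => z * altSeries a (z ^ 2)) ^ 2 := by
  have ha₁ := h.pos 1
  have ha₂ := h.pos 2
  refine lt_of_lt_of_le ?_ ((Real.sqrt_le_left (Real.sqrt_nonneg _ |>.trans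
    h.sqrt_le_radiusStarlike)).1 h.sqrt_le_radiusStarlike)
  gcongr
  exact lt_add_of_pos_right 1 (by positivity)

theorem radiusStarlike_sq_lt (h : RapidDecay a) :
    radiusStarlike 0 (fun z => z * altSeries a (z ^ 2)) ^ 2 <
      3 * a 1 / (9 * a 1 ^ 2 - 10 * a 2) := by
  obtain ⟨x, hx, hax, hquad, hxy⟩ := h.exists_lt_quadratic_nonpos
  have hle := radiusStarlike_le_norm (ofReal_ne_zero.2 (Real.sqrt_pos.2 hx).ne')
    (h.re_mul_deriv_div_sqrt_nonpos hx hax hquad)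
  rw [norm_real, Real.norm_of_nonneg (Real.sqrt_nonneg x)] at hle
  have h₀ := (Real.sqrt_nonneg _).trans h.sqrt_le_radiusStarlike
  exact ((Real.le_sqrt h₀ hx.le).1 hle).trans_lt hxy

end RapidDecay

section QGamma

variable {q : ℝ}

lemma summable_neg_mul_pow (hq₀ : 0 < q) (hq₁ : q < 1) (a : ℝ) :
    Summable fun k : ℕ => -(a * q ^ k) :=
  ((summable_geometric_of_lt_one hq₀.le hq₁).mul_left a).neg

lemma qPochInf_pos (hq₀ : 0 < q) (hq₁ : q < 1) {a : ℝ} (ha : a < 1) : 0 < qPochInf a q := by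
  have hfactor (k : ℕ) : 0 < 1 + -(a * q ^ k) := by
    nlinarith [pow_pos hq₀ k, pow_le_one₀ (n := k) hq₀.le hq₁.le]
  have hlog := Real.summable_log_one_add_of_summable (summable_neg_mul_pow hq₀ hq₁ a)
  simp only [qPochInf, sub_eq_add_neg]
  rw [← Real.rexp_tsum_eq_tprod hfactor hlog]
  exact Real.exp_pos _

lemma qPochInf_eq_one_sub_mul (hq₀ : 0 < q) (hq₁ : q < 1) (a : ℝ) :
    qPochInf a q = (1 - a) * qPochInf (a * q) q := by
  have hshift : (fun k : ℕ => 1 - a * q ^ (k + 1)) = fun k => 1 - a * q * q ^ k := by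
    funext k
    ring
  have hmul : Multipliable fun k : ℕ => 1 - a * q ^ (k + 1) := by
    rw [hshift]
    simp only [sub_eq_add_neg]
    exact Real.multipliable_one_add_of_summable (summable_neg_mul_pow hq₀ hq₁ (a * q))
  rw [qPochInf, tprod_eq_zero_mul' (f := fun k => 1 - a * q ^ k) hmul, hshift, pow_zero, mul_one,
    ← qPochInf]

lemma qGamma_pos (hq₀ : 0 < q) (hq₁ : q < 1) {x : ℝ} (hx : 0 < x) : 0 < qGamma q x :=
  div_pos (mul_pos (qPochInf_pos hq₀ hq₁ hq₁) (Real.rpow_pos_of_pos (sub_pos.2 hq₁) _))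
    (qPochInf_pos hq₀ hq₁ (Real.rpow_lt_one hq₀.le hq₁ hx))

lemma one_sub_mul_qGamma_add_one (hq₀ : 0 < q) (hq₁ : q < 1) {x : ℝ} (hx : 0 < x) :
    (1 - q) * qGamma q (x + 1) = (1 - q ^ x) * qGamma q x := by
  have hqx : q ^ x < 1 := Real.rpow_lt_one hq₀.le hq₁ hx
  have hpoch := qPochInf_eq_one_sub_mul hq₀ hq₁ (q ^ x)
  rw [← Real.rpow_add_one hq₀.ne'] at hpoch
  have hpos := qPochInf_pos hq₀ hq₁ (Real.rpow_lt_one hq₀.le hq₁ (add_pos hx one_pos))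
  have hpow : (1 - q) ^ (1 - x) = (1 - q) ^ (1 - (x + 1)) * (1 - q) := by
    rw [← Real.rpow_add_one (sub_pos.2 hq₁).ne']
    congr 1
    ring
  have hqx' : 1 - q ^ x ≠ 0 := (sub_pos.2 hqx).ne'
  rw [qGamma, qGamma, hpoch, hpow]
  field_simp

end QGamma

/-- The coefficients `a n` for which `gML γ σ q z = z * altSeries a (z ^ 2)`. -/
noncomputable def qMLCoeff (γ σ q : ℝ) (n : ℕ) : ℝ :=
  qGamma q (γ + 1) * (σ ^ (2 * n) * q ^ (n * (n - 1)) / qGamma q (2 * n + γ + 1))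

lemma gML_eq_mul_altSeries (γ σ q : ℝ) :
    gML γ σ q = fun z => z * altSeries (qMLCoeff γ σ q) (z ^ 2) := by
  funext z
  rw [gML, qML, altSeries, mul_assoc, ← tsum_mul_left]
  congr 1
  refine tsum_congr fun n => ?_
  rw [qMLCoeff, pow_mul]
  push_cast
  ring

lemma qMLCoeff_one (γ σ q : ℝ) :
    qMLCoeff γ σ q 1 = σ ^ 2 * qGamma q (γ + 1) / qGamma q (γ + 3) := by
  have harg : 2 * ((1 : ℕ) : ℝ) + γ + 1 = γ + 3 := by push_cast; ring
  rw [qMLCoeff, harg]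
  ring

lemma qMLCoeff_two (γ σ q : ℝ) :
    qMLCoeff γ σ q 2 = σ ^ 4 * q ^ 2 * qGamma q (γ + 1) / qGamma q (γ + 5) := by
  have harg : 2 * ((2 : ℕ) : ℝ) + γ + 1 = γ + 5 := by push_cast; ring
  rw [qMLCoeff, harg]
  ring

lemma qMLCoeff_succ_mul {q γ : ℝ} (hq₀ : 0 < q) (hq₁ : q < 1) (hγ : -1 < γ) (σ : ℝ) (n : ℕ) :
    qMLCoeff γ σ q (n + 1) *
        ((1 - q ^ (γ + 1) * q ^ (2 * n)) * (1 - q ^ (γ + 1) * q ^ (2 * n + 1))) =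
      σ ^ 2 * (1 - q) ^ 2 * q ^ (2 * n) * qMLCoeff γ σ q n := by
  have hx : 0 < 2 * n + γ + 1 := by linarith [n.cast_nonneg (α := ℝ)]
  have hfirst : q ^ (γ + 1) * q ^ (2 * n) = q ^ (2 * n + γ + 1) := by
    rw [← Real.rpow_add_natCast hq₀.ne']
    congr 1
    push_cast
    ring
  have hsecond : q ^ (γ + 1) * q ^ (2 * n + 1) = q ^ (2 * n + γ + 1 + 1) := by
    rw [pow_succ, ← mul_assoc, hfirst, ← Real.rpow_add_one hq₀.ne']
  have hrec₁ := one_sub_mul_qGamma_add_one hq₀ hq₁ hx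
  have hrec₂ := one_sub_mul_qGamma_add_one hq₀ hq₁ (add_pos hx one_pos)
  have hΓ := qGamma_pos hq₀ hq₁ hx
  have hΓ₂ := qGamma_pos hq₀ hq₁ (add_pos (add_pos hx one_pos) one_pos)
  have harg : 2 * ((n + 1 : ℕ) : ℝ) + γ + 1 = 2 * n + γ + 1 + 1 + 1 := by push_cast; ring
  have hexp : (n + 1) * (n + 1 - 1) = n * (n - 1) + 2 * n := by
    cases n with
    | zero => rfl
    | succ m => simp only [Nat.add_sub_cancel]; ring
  rw [hfirst, hsecond, qMLCoeff, qMLCoeff, harg, hexp, pow_add q, mul_add 2 n, pow_add σ]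
  have hrec : (1 - q ^ (2 * n + γ + 1)) * (1 - q ^ (2 * n + γ + 1 + 1)) * qGamma q (2 * n + γ + 1) =
      (1 - q) ^ 2 * qGamma q (2 * n + γ + 1 + 1 + 1) := by
    linear_combination (-(1 - q ^ (2 * n + γ + 1 + 1))) * hrec₁ - (1 - q) * hrec₂
  field_simp
  linear_combination (qGamma q (γ + 1) * σ ^ 2 * σ ^ (2 * n)) * hrec

/-- With `[m] = (1 - q ^ m) / (1 - q)` this says `q * [m] / [m + 2] ≤ m / (m + 2)`. -/
lemma add_two_mul_one_sub_pow_le {q : ℝ} (hq₀ : 0 ≤ q) (hq₁ : q ≤ 1) (m : ℕ) :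
    (m + 2) * (q * (1 - q ^ m)) ≤ m * (1 - q ^ (m + 2)) := by
  induction m with
  | zero => simp
  | succ m ih =>
    have hbernoulli : q ^ (m + 1) * (1 + (m + 1) * (1 - q)) ≤ 1 := by
      have := one_add_mul_le_pow (a := 1 - q) (by linarith) (m + 1)
      push_cast at this
      calc q ^ (m + 1) * (1 + (m + 1) * (1 - q)) ≤ q ^ (m + 1) * (1 + (1 - q)) ^ (m + 1) := by
            gcongr
        _ = (q * (1 + (1 - q))) ^ (m + 1) := (mul_pow _ _ _).symm
        _ ≤ 1 := pow_le_one₀ (by nlinarith) (by nlinarith [sq_nonneg (1 - q)])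
    have hincr := mul_nonneg (sub_nonneg.2 hq₁) (sub_nonneg.2 hbernoulli)
    push_cast
    ring_nf at ih hincr ⊢
    linarith

lemma mul_one_sub_le_div_mul {q y : ℝ} (hq₀ : 0 ≤ q) (hq₁ : q ≤ 1) {m : ℕ} (hy : q ^ m ≤ y) :
    q * (1 - y) ≤ m / (m + 2) * (1 - y * q ^ 2) := by
  have hpow := add_two_mul_one_sub_pow_le hq₀ hq₁ m
  have hslope : 0 ≤ (m + 2) * q - m * q ^ 2 := by
    nlinarith [mul_nonneg (m.cast_nonneg (α := ℝ)) (mul_nonneg hq₀ (sub_nonneg.2 hq₁))]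
  rw [div_mul_eq_mul_div, le_div_iff₀ (by positivity)]
  rw [pow_add] at hpow
  linarith [mul_nonneg (sub_nonneg.2 hy) hslope]

lemma pow_mul_one_sub_mul_one_sub_le {q y : ℝ} (hq₀ : 0 < q) (hq₁ : q < 1) (hy : q ^ 3 ≤ y)
    (hy₁ : y < 1) {n : ℕ} (hn : 1 ≤ n) :
    q ^ (2 * n) * ((1 - y) * (1 - y * q)) ≤
      2 / 5 * ((1 - y * q ^ (2 * n)) * (1 - y * q ^ (2 * n + 1))) := by
  have hy₀ : 0 < y := (pow_pos hq₀ 3).trans_le hy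
  have hfactor (k : ℕ) : 0 < 1 - y * q ^ k :=
    sub_pos.2 (mul_lt_one_of_nonneg_of_lt_one_left hy₀.le hy₁ (pow_le_one₀ hq₀.le hq₁.le))
  have hmono {j k : ℕ} (hjk : j ≤ k) : 1 - y * q ^ j ≤ 1 - y * q ^ k := by
    have := pow_le_pow_of_le_one hq₀.le hq₁.le hjk
    gcongr
  have hyq : 0 < 1 - y * q := by simpa using hfactor 1
  have hthree := mul_one_sub_le_div_mul hq₀.le hq₁.le hy
  have hfour := mul_one_sub_le_div_mul (m := 4) hq₀.le hq₁.le (y := y * q)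
    (by rw [pow_succ]; gcongr)
  have := sub_pos.2 hy₁
  have := hfactor 2
  calc q ^ (2 * n) * ((1 - y) * (1 - y * q)) ≤ q ^ 2 * ((1 - y) * (1 - y * q)) := by
        exact mul_le_mul_of_nonneg_right (pow_le_pow_of_le_one hq₀.le hq₁.le (by omega))
          (by positivity)
    _ = (q * (1 - y)) * (q * (1 - y * q)) := by ring
    _ ≤ ((3 : ℕ) / ((3 : ℕ) + 2) * (1 - y * q ^ 2)) *
          ((4 : ℕ) / ((4 : ℕ) + 2) * (1 - y * q * q ^ 2)) := by gcongr
    _ = 2 / 5 * ((1 - y * q ^ 2) * (1 - y * q ^ 3)) := by push_cast; ring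
    _ ≤ 2 / 5 * ((1 - y * q ^ (2 * n)) * (1 - y * q ^ (2 * n + 1))) := by
        have := hfactor 3
        exact mul_le_mul_of_nonneg_left (mul_le_mul (hmono (by omega)) (hmono (by omega))
          this.le (hfactor _).le) (by norm_num)

lemma rapidDecay_qMLCoeff {q σ γ : ℝ} (hq₀ : 0 < q) (hq₁ : q < 1) (hσ : σ ≠ 0) (hγ : -1 < γ)
    (hγ₂ : γ ≤ 2) : RapidDecay (qMLCoeff γ σ q) := by
  have hΓ (n : ℕ) : 0 < qGamma q (2 * n + γ + 1) :=
    qGamma_pos hq₀ hq₁ (by linarith [n.cast_nonneg (α := ℝ)])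
  have hΓ₁ : 0 < qGamma q (γ + 1) := qGamma_pos hq₀ hq₁ (by linarith)
  have hpos (n : ℕ) : 0 < qMLCoeff γ σ q n :=
    mul_pos hΓ₁ (div_pos (mul_pos ((even_two_mul n).pow_pos hσ) (by positivity)) (hΓ n))
  have hzero : qMLCoeff γ σ q 0 = 1 := by simp [qMLCoeff, hΓ₁.ne']
  refine ⟨hzero, hpos, fun n hn => ?_⟩
  have hrec := qMLCoeff_succ_mul hq₀ hq₁ hγ σ
  have hy₁ : q ^ (γ + 1) < 1 := Real.rpow_lt_one hq₀.le hq₁ (by linarith)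
  have hy : q ^ 3 ≤ q ^ (γ + 1) := by
    rw [← Real.rpow_natCast]
    exact Real.rpow_le_rpow_of_exponent_ge hq₀ hq₁.le (by push_cast; linarith)
  set y := q ^ (γ + 1)
  have hfactor (k : ℕ) : 0 < 1 - y * q ^ k :=
    sub_pos.2 (mul_lt_one_of_nonneg_of_lt_one_left ((pow_pos hq₀ 3).le.trans hy) hy₁
      (pow_le_one₀ hq₀.le hq₁.le))
  have hrec₀ : qMLCoeff γ σ q 1 * ((1 - y) * (1 - y * q)) = σ ^ 2 * (1 - q) ^ 2 := by
    simpa [hzero] using hrec 0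
  refine le_of_mul_le_mul_right ?_ (mul_pos (hfactor (2 * n)) (hfactor (2 * n + 1)))
  calc qMLCoeff γ σ q (n + 1) * ((1 - y * q ^ (2 * n)) * (1 - y * q ^ (2 * n + 1)))
      = qMLCoeff γ σ q 1 * qMLCoeff γ σ q n * (q ^ (2 * n) * ((1 - y) * (1 - y * q))) := by
        rw [hrec n, ← hrec₀]
        ring
    _ ≤ qMLCoeff γ σ q 1 * qMLCoeff γ σ q n *
          (2 / 5 * ((1 - y * q ^ (2 * n)) * (1 - y * q ^ (2 * n + 1)))) :=
        mul_le_mul_of_nonneg_left (pow_mul_one_sub_mul_one_sub_le hq₀ hq₁ hy hy₁ hn)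
          (mul_pos (hpos 1) (hpos n)).le
    _ = 2 / 5 * qMLCoeff γ σ q 1 * qMLCoeff γ σ q n *
          ((1 - y * q ^ (2 * n)) * (1 - y * q ^ (2 * n + 1))) := by ring

theorem stmt10_general (q σ γ : ℝ) (hq0 : 0 < q) (hq1 : q < 1) (hσ : σ ≠ 0)
    (hγ : -1 < γ) (hγ2 : γ ≤ 2) :
    qGamma q (γ + 3) / (3 * σ ^ 2 * qGamma q (γ + 1)) <
      radiusStarlike 0 (gML γ σ q) ^ 2 ∧
    radiusStarlike 0 (gML γ σ q) ^ 2 <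
      3 * qGamma q (γ + 3) * qGamma q (γ + 5) /
        (σ ^ 2 * (9 * qGamma q (γ + 1) * qGamma q (γ + 5) -
          10 * q ^ 2 * qGamma q (γ + 3) ^ 2)) := by
  have h := rapidDecay_qMLCoeff hq0 hq1 hσ hγ hγ2
  have hΓ₁ : qGamma q (γ + 1) ≠ 0 := (qGamma_pos hq0 hq1 (by linarith)).ne'
  have hΓ₃ : qGamma q (γ + 3) ≠ 0 := (qGamma_pos hq0 hq1 (by linarith)).ne'
  have hΓ₅ : qGamma q (γ + 5) ≠ 0 := (qGamma_pos hq0 hq1 (by linarith)).ne'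
  rw [gML_eq_mul_altSeries]
  constructor
  · convert h.lt_radiusStarlike_sq using 1
    rw [qMLCoeff_one]
    field_simp
  · convert h.radiusStarlike_sq_lt using 1
    have hden : 9 * qMLCoeff γ σ q 1 ^ 2 - 10 * qMLCoeff γ σ q 2 =
        σ ^ 4 * qGamma q (γ + 1) / (qGamma q (γ + 3) ^ 2 * qGamma q (γ + 5)) *
          (9 * qGamma q (γ + 1) * qGamma q (γ + 5) - 10 * q ^ 2 * qGamma q (γ + 3) ^ 2) := by
      rw [qMLCoeff_one, qMLCoeff_two]
      field_simp
    rw [hden, qMLCoeff_one]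
    field_simp

theorem stmt10 (q σ γ : ℝ) (hq0 : 0 < q) (hq1 : q < 1) (hσ : 0 < σ)
    (hγ0 : 0 ≤ γ) (hγ2 : γ < 2) (hR : condR q γ) :
    qGamma q (γ + 3) / (3 * σ ^ 2 * qGamma q (γ + 1)) <
      radiusStarlike 0 (gML γ σ q) ^ 2 ∧
    radiusStarlike 0 (gML γ σ q) ^ 2 <
      3 * qGamma q (γ + 3) * qGamma q (γ + 5) /
        (σ ^ 2 * (9 * qGamma q (γ + 1) * qGamma q (γ + 5) -
          10 * q ^ 2 * qGamma q (γ + 3) ^ 2)) :=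
  stmt10_general q σ γ hq0 hq1 hσ.ne' (by linarith) hγ2.le
end
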